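/- For each positive integer r let X_r be the volume random variable on CSPP(r) equipped with the uniform probability distribution, with mean μ_r and standard deviation σ_r. Then the normalized random variables Y_r = (X_r − μ_r)/σ_r converge in distribution, as r → ∞, to a standard normal random variable (mean 0, variance 1). -/

import Mathlib

open Finset Filter MeasureTheory

/-- Plane partitions fitting inside an `(r,s,t)`-box. -/
def PP (r s t : ℕ) : Finset (Fin r → Fin s → Fin (t + 1)) :=
  Finset.univ.filter fun p =>
    ∀ i i' : Fin r, ∀ j j' : Fin s, i ≤ i' → j ≤ j' → (p i' j' : ℕ) ≤ (p i j : ℕ)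

/-- The volume of a plane partition. -/
def vol {r s t : ℕ} (p : Fin r → Fin s → Fin (t + 1)) : ℕ :=
  ∑ i, ∑ j, (p i j : ℕ)

/-- Cyclically symmetric plane partitions inside an `(r,r,r)`-box: the cube
`(i,j,k)` belongs to the pile iff `(k,i,j)` does (0-based: `k < p i j ↔ j < p k i`). -/
def CSPP (r : ℕ) : Finset (Fin r → Fin r → Fin (r + 1)) :=
  (PP r r r).filter fun p =>
    ∀ i j k : Fin r, ((k : ℕ) < (p i j : ℕ) ↔ (j : ℕ) < (p k i : ℕ))

/-- The mean volume for the uniform distribution on `CSPP(r)`. -/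
noncomputable def meanCSPP (r : ℕ) : ℝ :=
  (∑ p ∈ CSPP r, (vol p : ℝ)) / ((CSPP r).card : ℝ)

/-- The standard deviation of the volume for the uniform distribution on `CSPP(r)`. -/
noncomputable def sdCSPP (r : ℕ) : ℝ :=
  Real.sqrt ((∑ p ∈ CSPP r, ((vol p : ℝ) - meanCSPP r) ^ 2) / ((CSPP r).card : ℝ))

/-!
The proof goes through the zeros of the volume generating function.

**Determinant.** Put `p = q³`. The generating function `∑ q ^ vol` over `CSPP r` equals
`det (1 + Q)`, where `Q` is the `r × r` matrix with entries `q p ^ i [i + j choose i]_p`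
(`gf_eq_det`). To see this, peel off the cubes whose smallest coordinate is `x`, for
`x = 0, 1, …`; up to rotation each such shell is a plane region, described by its two boundary
paths above and below the diagonal. A cyclically symmetric plane partition with `k` diagonal cubes
thus becomes a pair of families of `k` nonintersecting paths with common end points
(`sum_dg_eq`). On the other side, `det (1 + Q)` is a sum of principal minors, `Q` factors through
two products of one-particle transfer matrices (`Qm_eq`), and Cauchy–Binet with the evaluation of
the minors of a single step (`compound_Nm`) expands it over the same pairs (`det_eq_sum_paths`).

**Zeros.** Let `p` be a primitive `d`-th root of unity and `r = m d + s` with `s < d`. By the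
`q`-Lucas theorem `Q` is, up to truncation, the tensor product of a Pascal matrix of size `m + 1`
with `q T`, where the `d × d` matrix `T` satisfies `p T³ = 1` (`Tm_cube`). This provides explicit
kernel vectors of `1 + Q`; over the three cube roots `q` of `p` the nullities add up to at least
`3 min (s, d - s) - d` (`nullity_sum`). A totient sum shows that these numbers, summed over all
`p`, add up to `r³` (`sum_totient_three_min`). As the generating function has degree at most `r³`,
all its zeros have been found: they are roots of unity of order at most `9 r` (`roots_structure`).

**Limit.** Consequently the characteristic function of the volume, centred at `r³ / 2`, is a product
of `r³` factors `cos (θ / 2) - c sin (θ / 2)` with real `c` and `1 + c² ≤ 324 r²`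
(`fourier_prod`), and the variance is `∑ (1 + c²) / 4 ≥ r³ / 4` (`moments_of_fourier`). The square
of the product is `∏ (1 - (1 + c²) sin² (θ / 2))`; for `θ = t / σ` each factor tends uniformly to
`1`, so the product tends to `exp (-t² / 2)` (`tendsto_prod`), and Lévy's continuity theorem
concludes (`clt_of_gf`).
-/

/-! ### Gaussian binomial coefficients -/

section qbinom
variable {R : Type*} [CommRing R]

/-- `uq p n k = p ^ (k (k - 1) / 2) * [n choose k]_p`, defined by its Pascal recursion. -/
def uq (p : R) : ℕ → ℕ → R
  | _, 0 => 1
  | 0, _ + 1 => 0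
  | n + 1, k + 1 => uq p n (k + 1) + p ^ n * uq p n k

/-- The Gaussian binomial coefficient `[i + j choose i]_p`, written through the
`q`-Vandermonde convolution. -/
def gb (p : R) (i j : ℕ) : R := ∑ k ∈ range (i + 1), p ^ k * uq p i k * uq p j k

lemma uq_zero_right (p : R) (n : ℕ) : uq p n 0 = 1 := by cases n <;> rfl
lemma uq_succ (p : R) (n k : ℕ) : uq p (n+1) (k+1) = uq p n (k+1) + p^n * uq p n k := by
  simp [uq]

lemma uq_eq_zero (p : R) : ∀ n k : ℕ, n < k → uq p n k = 0
  | 0, 0, h => by omega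
  | 0, k+1, _ => rfl
  | n+1, 0, h => by omega
  | n+1, k+1, h => by
    rw [uq_succ, uq_eq_zero p n (k+1) (by omega), uq_eq_zero p n k (by omega)]; simp

/-- The second Pascal recursion. -/
lemma uq_succ' (p : R) : ∀ n k : ℕ,
    uq p (n+1) (k+1) = p^(k+1) * uq p n (k+1) + p^k * uq p n k
  | 0, 0 => by simp [uq]
  | 0, k+1 => by simp [uq]
  | n+1, 0 => by
    rw [uq_succ, uq_succ' p n 0]
    have := uq_succ p n 0
    have h2 := uq_succ' p n 0
    simp only [uq_zero_right] at *
    rw [h2] at this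
    linear_combination -p * this
  | n+1, k+1 => by
    rw [uq_succ p (n+1) (k+1), uq_succ' p n (k+1), uq_succ' p n k]
    have h1 := uq_succ p n (k+1)
    have h2 := uq_succ p n k
    have h3 := uq_succ' p n (k+1)
    have h4 := uq_succ' p n k
    rw [h3] at h1
    rw [h4] at h2
    linear_combination -(p^(k+2)) * h1 - p^(k+1) * h2

lemma gb_eq (p : R) (i j N : ℕ) (h : i < N) :
    gb p i j = ∑ k ∈ range N, p ^ k * uq p i k * uq p j k := by
  unfold gb
  apply Finset.sum_subset
  · intro x; simp; omega
  · intro x _ hx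
    rw [uq_eq_zero p i x (by simpa using hx)]; simp

lemma gb_comm (p : R) (i j : ℕ) : gb p i j = gb p j i := by
  rw [gb_eq p i j (i+j+1) (by omega), gb_eq p j i (i+j+1) (by omega)]
  exact Finset.sum_congr rfl fun k _ => by ring

lemma gb_zero_left (p : R) (j : ℕ) : gb p 0 j = 1 := by simp [gb, uq_zero_right]
lemma gb_zero_right (p : R) (j : ℕ) : gb p j 0 = 1 := by rw [gb_comm, gb_zero_left]

/-- Pascal recursion for Gaussian binomial coefficients. -/
lemma gb_succ (p : R) (i j : ℕ) :
    gb p (i+1) (j+1) = gb p i (j+1) + p^(i+1) * gb p (i+1) j := by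
  rw [gb_eq p (i+1) (j+1) (i+3) (by omega), gb_eq p i (j+1) (i+3) (by omega),
    gb_eq p (i+1) j (i+2) (by omega), sum_range_succ', sum_range_succ' _ (i+2), mul_sum]
  have e : ∑ k ∈ range (i+2), p^(k+1) * uq p (i+1) (k+1) * uq p (j+1) (k+1)
     = ∑ k ∈ range (i+2), p^(k+1) * uq p i (k+1) * uq p (j+1) (k+1)
     + p^i * ∑ k ∈ range (i+2), p^(k+1) * uq p i k * (p^(k+1) * uq p j (k+1) + p^k * uq p j k) := by
    rw [mul_sum, ← sum_add_distrib]
    refine sum_congr rfl fun k _ => ?_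
    rw [← uq_succ', uq_succ p i k]; ring
  have e2 : ∑ k ∈ range (i+2), p^(i+1) * (p^k * uq p (i+1) k * uq p j k) =
    p^i * ∑ k ∈ range (i+2), p^(k+1) * uq p i k * (p^(k+1) * uq p j (k+1) + p^k * uq p j k) := by
    have a1 : ∑ k ∈ range (i+2), p^(k+1) * uq p i k * (p^(k+1) * uq p j (k+1) + p^k * uq p j k)
      = ∑ k ∈ range (i+2), (p^(k+1) * uq p i k * (p^(k+1) * uq p j (k+1)))
       + ∑ k ∈ range (i+2), (p^(k+1) * uq p i k * (p^k * uq p j k)) := by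
      rw [← sum_add_distrib]; exact sum_congr rfl fun k _ => by ring
    rw [a1, sum_range_succ (n := i+1) (f := fun k => (p^(k+1) * uq p i k * (p^(k+1) * uq p j (k+1)))),
      uq_eq_zero p i (i+1) (by omega), sum_range_succ', sum_range_succ' (n := i+1) (f := fun k => (p^(k+1) * uq p i k * (p^k * uq p j k)))]
    simp only [uq_succ', uq_zero_right]
    simp only [mul_add, mul_sum, sum_add_distrib, add_mul]
    have : ∀ x y z w x' y' : R, x = x' → y = y' → z = w → x + y + z = y' + 0 + (x' + w) := by
      intros; subst_vars; ring
    simp only [mul_zero, zero_mul]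
    refine this _ _ _ _ _ _ ?_ ?_ ?_
    · exact sum_congr rfl fun k _ => by ring
    · exact sum_congr rfl fun k _ => by ring
    · ring
  rw [e, e2]
  simp only [uq_zero_right]
  ring

lemma gb_succ' (p : R) (i j : ℕ) :
    gb p (i+1) (j+1) = p^(j+1) * gb p i (j+1) + gb p (i+1) j := by
  rw [gb_comm, gb_succ, gb_comm p j, gb_comm p (j+1)]; ring

/-- The recursion given by the product formula for Gaussian binomial coefficients, without
denominators. -/
lemma gb_mul (p : R) (i k : ℕ) : (1 - p^(i+1)) * gb p (i+1) k = (1 - p^(i+1+k)) * gb p i k := by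
  cases k with
  | zero => simp [gb_zero_right]
  | succ k =>
    have h1 := gb_succ p i k
    have h2 := gb_succ' p i k
    have : p^(i+1+(k+1)) = p^(i+1) * p^(k+1) := by rw [pow_add]
    rw [this]
    linear_combination h1 - p^(i+1) * h2

end qbinom

/-! ### Gaussian binomial coefficients at a root of unity -/

section lucas
variable {K : Type*} [Field K] {p : K} {d : ℕ}

lemma one_sub_pow_ne (hp : IsPrimitiveRoot p d) {b : ℕ} (h0 : 0 < b) (hb : b < d) :
    1 - p ^ b ≠ 0 := fun h =>
  hp.pow_ne_one_of_pos_of_lt h0.ne' hb (sub_eq_zero.mp h).symm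

/-- Adding `b` and `b'` in base `d` produces a carry, so the Gaussian binomial coefficient vanishes. -/
lemma gb_vanish (hp : IsPrimitiveRoot p d) : ∀ b b' : ℕ, b < d → b' < d → d ≤ b + b' →
    gb p b b' = 0
  | 0, b', _, _, _ => by omega
  | b+1, 0, _, _, _ => by omega
  | b+1, b'+1, h1, h2, h3 => by
    by_cases h : b + 1 + (b' + 1) = d
    · have := gb_mul p b (b'+1)
      rw [h, hp.pow_eq_one, sub_self, zero_mul] at this
      exact (mul_eq_zero.mp this).resolve_left (one_sub_pow_ne hp (by omega) h1)
    · rw [gb_succ, gb_vanish hp b (b'+1) (by omega) h2 (by omega),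
        gb_vanish hp (b+1) b' h1 (by omega) (by omega)]
      simp

/-- The `q`-Lucas theorem. The factor `gb p b b'` vanishes when `b + b' ≥ d`. -/
lemma gb_lucas (hp : IsPrimitiveRoot p d) : ∀ (n a a' b b' : ℕ), (a*d+b) + (a'*d+b') = n → b < d →
    b' < d → gb p (a*d+b) (a'*d+b') = ((a+a').choose a : K) * gb p b b' := by
  intro n
  induction n with
  | zero =>
    intro a a' b b' h hb hb'
    have h1 : a * d = 0 := by omega
    have h2 : a' * d = 0 := by omega
    have h3 : b = 0 := by omega
    have h4 : b' = 0 := by omega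
    have h5 : a = 0 := (Nat.mul_eq_zero.mp h1).resolve_right (by omega)
    have h6 : a' = 0 := (Nat.mul_eq_zero.mp h2).resolve_right (by omega)
    subst h3 h4 h5 h6
    simp
  | succ n ih =>
    intro a a' b b' h hb hb'
    obtain ⟨D, rfl⟩ : ∃ D, d = D + 1 := ⟨d - 1, by omega⟩
    have hpa : ∀ a, p ^ (a * (D+1)) = 1 := fun a => by
      rw [mul_comm, pow_mul, hp.pow_eq_one, one_pow]
    rcases b with _ | b
    · rcases a with _ | a
      · simp [gb_zero_left]
      have e1 : (a+1) * (D+1) + 0 = (a * (D+1) + D) + 1 := by ring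
      rcases b' with _ | b'
      · rcases a' with _ | a'
        · simp [gb_zero_right]
        have e2 : (a'+1) * (D+1) + 0 = (a' * (D+1) + D) + 1 := by ring
        rw [e1, e2, gb_succ, ← e2, ih a (a'+1) D 0 (by omega) (by omega) (by omega), ← e1,
          ih (a+1) a' 0 D (by omega) (by omega) (by omega), gb_zero_right, gb_zero_left,
          add_zero, hpa, gb_zero_left]
        have : (a + 1 + (a' + 1)).choose (a+1) = (a + (a'+1)).choose a + (a+1+a').choose (a+1) := by
          rw [show a + 1 + (a' + 1) = (a + (a'+1)) + 1 by ring, Nat.choose_succ_succ]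
          congr 2; ring
        rw [this]; push_cast; ring
      · rw [e1, show a'*(D+1) + (b'+1) = (a' * (D+1) + b') + 1 by ring, gb_succ, ← e1,
          add_assoc _ b' 1, ih a a' D (b'+1) (by omega) (by omega) (by omega),
          ih (a+1) a' 0 b' (by omega) (by omega) (by omega),
          gb_vanish hp D (b'+1) (by omega) (by omega) (by omega), add_zero, hpa]
        simp [gb_zero_left]
    · rcases b' with _ | b'
      · rcases a' with _ | a'
        · simp [gb_zero_right]
        have e2 : (a'+1) * (D+1) + 0 = (a' * (D+1) + D) + 1 := by ring
        rw [e2, show a*(D+1) + (b+1) = (a * (D+1) + b) + 1 by ring, gb_succ, ← e2,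
          add_assoc _ b 1, ih a (a'+1) b 0 (by omega) (by omega) (by omega),
          ih a a' (b+1) D (by omega) (by omega) (by omega),
          gb_vanish hp (b+1) D (by omega) (by omega) (by omega)]
        simp [gb_zero_right]
      · rw [show a*(D+1) + (b+1) = (a * (D+1) + b) + 1 by ring,
          show a'*(D+1) + (b'+1) = (a' * (D+1) + b') + 1 by ring, gb_succ,
          add_assoc _ b 1, add_assoc _ b' 1,
          ih a a' b (b'+1) (by omega) (by omega) (by omega),
          ih a a' (b+1) b' (by omega) (by omega) (by omega), gb_succ, pow_add, hpa]
        ring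

/-- For fixed `i < d`, the coefficient `[i + k choose i]_p` is a polynomial of degree at most `i`
in `p ^ k`. -/
lemma gb_poly (hp : IsPrimitiveRoot p d) : ∀ i : ℕ, i < d → ∃ P : Polynomial K,
    P.natDegree ≤ i ∧ ∀ k, gb p i k = P.eval (p ^ k)
  | 0, _ => ⟨1, by simp, by simp [gb_zero_left]⟩
  | i+1, h => by
    obtain ⟨P, hP, hk⟩ := gb_poly hp i (by omega)
    refine ⟨Polynomial.C (1 - p^(i+1))⁻¹ * ((1 - Polynomial.C (p^(i+1)) * Polynomial.X) * P), ?_, ?_⟩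
    · refine (Polynomial.natDegree_C_mul_le _ _).trans ?_
      refine Polynomial.natDegree_mul_le.trans ?_
      have : (1 - Polynomial.C (p^(i+1)) * Polynomial.X : Polynomial K).natDegree ≤ 1 := by
        compute_degree
      omega
    · intro k
      have := gb_mul p i k
      have h1 := one_sub_pow_ne hp (b := i+1) (by omega) h
      simp only [Polynomial.eval_mul, Polynomial.eval_C, Polynomial.eval_sub, Polynomial.eval_one,
        Polynomial.eval_X, ← hk]
      rw [← pow_add, ← this]; field_simp

/-- Orthogonality of the powers of `p`: the exponents `1, …, d - 1` sum to zero over a period. -/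
lemma sum_pow_mul_eval (hp : IsPrimitiveRoot p d) (P : Polynomial K) (h : P.natDegree + 1 < d) :
    ∑ k ∈ range d, p ^ k * P.eval (p ^ k) = 0 := by
  simp_rw [Polynomial.eval_eq_sum_range, mul_sum]
  rw [sum_comm]
  refine sum_eq_zero fun e he => ?_
  have he' := mem_range.mp he
  have : ∑ k ∈ range d, (p ^ (e+1)) ^ k = 0 := by
    have h1 := mul_neg_geom_sum (p ^ (e+1)) d
    rw [← pow_mul, mul_comm (e+1) d, pow_mul, hp.pow_eq_one, one_pow, sub_self] at h1
    exact (mul_eq_zero.mp h1).resolve_left (one_sub_pow_ne hp (by omega) (by omega))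
  calc _ = P.coeff e * ∑ k ∈ range d, (p ^ (e+1)) ^ k := by
        rw [mul_sum]; refine sum_congr rfl fun k _ => ?_
        rw [← pow_mul, ← pow_mul]; ring
    _ = 0 := by rw [this, mul_zero]

/-- The matrix `p ^ i [i + j choose i]_p` of size `d`. -/
def Tm (p : K) (d : ℕ) : Matrix (Fin d) (Fin d) K := Matrix.of fun i j => p ^ (i:ℕ) * gb p i j

lemma Tm_eq_zero (hp : IsPrimitiveRoot p d) (i j : Fin d) (h : d ≤ i + j) : Tm p d i j = 0 := by
  simp [Tm, gb_vanish hp i j i.2 j.2 h]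

/-- `T²` vanishes strictly above the antidiagonal, whereas `T` vanishes strictly below it
(`Tm_eq_zero`). -/
lemma Tm_sq_eq_zero (hp : IsPrimitiveRoot p d) (i j : Fin d) (h : (i:ℕ) + j + 1 < d) :
    (Tm p d * Tm p d) i j = 0 := by
  obtain ⟨P, hP, hPk⟩ := gb_poly hp i i.2
  obtain ⟨P', hP', hPk'⟩ := gb_poly hp j j.2
  have := sum_pow_mul_eval hp (P * P') (by
    have := Polynomial.natDegree_mul_le (p := P) (q := P'); omega)
  rw [Matrix.mul_apply]
  simp only [Tm, Matrix.of_apply]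
  rw [Fin.sum_univ_eq_sum_range (fun k => p ^ (i:ℕ) * gb p i k * (p ^ k * gb p k j)) d]
  calc _ = p ^ (i:ℕ) * ∑ k ∈ range d, p ^ k * (P * P').eval (p ^ k) := by
        rw [mul_sum]; refine sum_congr rfl fun k _ => ?_
        rw [Polynomial.eval_mul, ← hPk, ← hPk', gb_comm p k j]; ring
    _ = 0 := by rw [this, mul_zero]

lemma Tm_cube_symm (i j : Fin d) :
    p ^ (j:ℕ) * (Tm p d * (Tm p d * Tm p d)) i j = p ^ (i:ℕ) * (Tm p d * (Tm p d * Tm p d)) j i := by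
  simp only [Matrix.mul_apply, Tm, Matrix.of_apply, mul_sum]
  rw [sum_comm]
  refine sum_congr rfl fun k _ => sum_congr rfl fun l _ => ?_
  rw [gb_comm p i l, gb_comm p l k, gb_comm p k j]; ring

/-- `p T³ = 1`. The zero patterns of `T` and `T²` make `T³` triangular; it is symmetric up to a
diagonal scaling (`Tm_cube_symm`), hence diagonal, and it commutes with `T`, hence is scalar. The
scalar is read off in a corner. -/
lemma Tm_cube (hp : IsPrimitiveRoot p d) (hd : 0 < d) :
    p • (Tm p d * (Tm p d * Tm p d)) = 1 := by
  have hp0 : p ≠ 0 := hp.ne_zero hd.ne'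
  set M := Tm p d * (Tm p d * Tm p d) with hM
  have low : ∀ i j : Fin d, j < i → M i j = 0 := by
    intro i j hij
    rw [hM, Matrix.mul_apply]
    refine sum_eq_zero fun k _ => ?_
    by_cases h : d ≤ i + k
    · rw [Tm_eq_zero hp i k h, zero_mul]
    · rw [Tm_sq_eq_zero hp k j (by omega), mul_zero]
  have off : ∀ i j : Fin d, i ≠ j → M i j = 0 := by
    intro i j hij
    rcases lt_or_gt_of_ne hij with h | h
    · have := Tm_cube_symm (p := p) i j
      rw [← hM, low j i h, mul_zero] at this
      exact (mul_eq_zero.mp this).resolve_left (pow_ne_zero _ hp0)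
    · exact low i j h
  have comm : M * Tm p d = Tm p d * M := by rw [hM]; simp only [mul_assoc]
  let z : Fin d := ⟨0, hd⟩
  let l : Fin d := ⟨d - 1, by omega⟩
  have diag : ∀ j, M j j = M z z := by
    intro j
    have := congrFun (congrFun comm z) j
    rw [Matrix.mul_apply, Matrix.mul_apply, sum_eq_single z, sum_eq_single j] at this
    · have e : Tm p d z j = 1 := by simp [Tm, z, gb_zero_left]
      rw [e] at this; simpa using this.symm
    · intro k _ hk; rw [off k j hk, mul_zero]
    · simp
    · intro k _ hk; rw [off z k hk.symm, zero_mul]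
    · simp
  have zz : p * M z z = 1 := by
    rw [hM, Matrix.mul_apply, sum_eq_single l, Matrix.mul_apply, sum_eq_single z]
    · have e : p ^ (d-1) * p = 1 := by rw [← pow_succ, Nat.sub_add_cancel hd, hp.pow_eq_one]
      simp [Tm, z, l, gb_zero_left, gb_zero_right, mul_comm p, e]
    · intro k _ hk
      have : (k:ℕ) ≠ 0 := fun h => hk (Fin.ext h)
      rw [Tm_eq_zero hp l k (by simp [l]; omega), zero_mul]
    · simp
    · intro k _ hk
      have : (k:ℕ) ≠ d - 1 := fun h => hk (Fin.ext h)
      rw [Tm_sq_eq_zero hp k z (by simp [z]; omega), mul_zero]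
    · simp
  ext i j
  by_cases h : i = j
  · subst h; simp [diag i, zz]
  · simp [off i j h, Matrix.one_apply_ne h]
end lucas

/-! ### A linear system for the Pascal matrix -/

section pascal

/-- Vandermonde: the Cholesky factorization of the symmetric Pascal matrix. -/
lemma sum_choose_mul_choose (i j N : ℕ) (h : i < N) :
    ∑ k ∈ range N, i.choose k * j.choose k = (i+j).choose i := by
  rw [add_comm, Nat.add_choose_eq, Finset.Nat.sum_antidiagonal_eq_sum_range_succ (fun a b => j.choose a * i.choose b)]
  symm
  calc _ = ∑ k ∈ range (i+1), i.choose k * j.choose k := by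
        refine sum_congr rfl fun k hk => ?_
        rw [Nat.choose_symm (by simpa [Nat.lt_succ_iff] using hk), mul_comm]
    _ = _ := by
        apply Finset.sum_subset
        · intro x; simp; omega
        · intro x _ hx
          rw [Nat.choose_eq_zero_of_lt (by simpa using hx), zero_mul]

lemma sum_neg_choose (N : ℕ) : ∀ i j : ℕ, i < N →
    ∑ k ∈ range N, (-1:ℝ) ^ k * i.choose k * k.choose j = if i = j then (-1) ^ i else 0 := by
  intro i
  induction i with
  | zero =>
    intro j h
    rw [sum_eq_single 0]
    · cases j <;> simp
    · intro k _ hk; rw [Nat.choose_eq_zero_of_lt (by omega)]; simp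
    · simp; omega
  | succ i ih =>
    intro j h
    have key : ∑ k ∈ range N, (-1:ℝ) ^ k * (i+1).choose k * k.choose j =
        ∑ k ∈ range N, (-1:ℝ) ^ k * i.choose k * k.choose j
        - ∑ k ∈ range N, (-1:ℝ) ^ k * i.choose k * (k+1).choose j := by
      obtain ⟨M, rfl⟩ : ∃ M, N = M + 1 := ⟨N - 1, by omega⟩
      rw [sum_range_succ', sum_range_succ', sum_range_succ (n := M) (f := fun k => (-1:ℝ) ^ k * i.choose k * (k+1).choose j), Nat.choose_eq_zero_of_lt (show i < M by omega), add_sub_right_comm]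
      simp only [Nat.cast_zero, mul_zero, zero_mul, add_zero, ← sum_sub_distrib]
      congr 1
      · refine sum_congr rfl fun k _ => ?_
        rw [Nat.choose_succ_succ]; push_cast; ring
      · simp
    rw [key]
    cases j with
    | zero => simp
    | succ j =>
      have : ∀ k : ℕ, (-1:ℝ) ^ k * i.choose k * (k+1).choose (j+1) =
          (-1:ℝ) ^ k * i.choose k * k.choose j + (-1:ℝ) ^ k * i.choose k * k.choose (j+1) := by
        intro k; rw [Nat.choose_succ_succ]; push_cast; ring
      simp only [this, sum_add_distrib]
      rw [ih j (by omega)]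
      split_ifs <;> first | omega | (ring)

open Matrix in
/-- Solution of the linear system attached to the symmetric Pascal matrix `B` of size `m + 1`:
`x = (1 - B + B²)⁻¹ e_m` and `y = (1 - B) x`. The vanishing `y m = 0` comes from the
matrix `J = D Lᵀ`, where `B = L Lᵀ`, which satisfies `B J B = J`. -/
lemma pascal_system (m : ℕ) : ∃ x y : Fin (m+1) → ℝ,
    (∀ a, x a - ∑ a' : Fin (m+1), (((a:ℕ)+a').choose a : ℝ) * y a' = if a = Fin.last m then 1 else 0) ∧
    (∀ a, y a + ∑ a' : Fin (m+1), (((a:ℕ)+a').choose a : ℝ) * x a'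
      - ∑ a' : Fin (m+1), (((a:ℕ)+a').choose a : ℝ) * y a' = if a = Fin.last m then 1 else 0) ∧
    y (Fin.last m) = 0 := by
  let B : Matrix (Fin (m+1)) (Fin (m+1)) ℝ := of fun a a' => (((a:ℕ)+a').choose a : ℝ)
  let L : Matrix (Fin (m+1)) (Fin (m+1)) ℝ := of fun a a' => ((a:ℕ).choose a' : ℝ)
  let D : Matrix (Fin (m+1)) (Fin (m+1)) ℝ := diagonal fun a => (-1) ^ (a:ℕ)
  let e : Fin (m+1) → ℝ := fun a => if a = Fin.last m then 1 else 0
  have hB : B = L * Lᵀ := by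
    ext i j
    simp only [B, L, mul_apply, of_apply, transpose_apply]
    rw [Fin.sum_univ_eq_sum_range (fun k => (((i:ℕ).choose k : ℝ) * ((j:ℕ).choose k))) (m+1),
      ← sum_choose_mul_choose i j (m+1) i.2]
    push_cast; rfl
  have hL : L * D * L = D := by
    ext i j
    rw [mul_apply]
    simp only [D, L, of_apply, mul_diagonal, diagonal_apply]
    rw [Fin.sum_univ_eq_sum_range (fun k => (((i:ℕ).choose k : ℝ) * (-1)^k * (k.choose j))) (m+1)]
    have := sum_neg_choose (m+1) i j i.2
    simp only [Fin.ext_iff, ← this]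
    exact sum_congr rfl fun k _ => by ring
  have hDt : Dᵀ = D := diagonal_transpose _
  have hLt : Lᵀ * D * Lᵀ = D := by
    have := congrArg transpose hL
    rwa [transpose_mul, transpose_mul, hDt, ← mul_assoc] at this
  have hBt : Bᵀ = B := by rw [hB, transpose_mul, transpose_transpose]
  let J := D * Lᵀ
  have hBJ : B * J = L * D := by
    rw [hB]; simp only [J]; rw [mul_assoc, ← mul_assoc Lᵀ, hLt]
  have hBJB : B * J * B = J := by rw [hBJ, hB, ← mul_assoc, hL]
  let A := 1 - B + B * B
  have hinj : Function.Injective A.mulVec := by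
    rw [← Matrix.coe_mulVecLin, injective_iff_map_eq_zero]
    intro x hx
    rw [Matrix.coe_mulVecLin] at hx
    have h0 : x ⬝ᵥ (A *ᵥ x) = 0 := by rw [hx, dotProduct_zero]
    have hBB : x ⬝ᵥ ((B * B) *ᵥ x) = (B *ᵥ x) ⬝ᵥ (B *ᵥ x) := by
      rw [← mulVec_mulVec, dotProduct_mulVec, ← mulVec_transpose, hBt]
    have h1 : x ⬝ᵥ (A *ᵥ x) = (B *ᵥ x - (1/2:ℝ) • x) ⬝ᵥ (B *ᵥ x - (1/2:ℝ) • x) + (3/4) * (x ⬝ᵥ x) := by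
      simp only [A]
      rw [add_mulVec, sub_mulVec, dotProduct_add, dotProduct_sub, hBB, one_mulVec]
      simp only [dotProduct_sub, sub_dotProduct, dotProduct_smul, smul_dotProduct, smul_eq_mul]
      rw [dotProduct_comm (B *ᵥ x) x]; ring
    have h2 : 0 ≤ (B *ᵥ x - (1/2:ℝ) • x) ⬝ᵥ (B *ᵥ x - (1/2:ℝ) • x) :=
      Finset.sum_nonneg fun i _ => mul_self_nonneg _
    have h3 : 0 ≤ x ⬝ᵥ x := Finset.sum_nonneg fun i _ => mul_self_nonneg _
    exact dotProduct_self_eq_zero.mp (by linarith)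
  have hsurj : Function.Surjective A.mulVec := by
    rw [← Matrix.coe_mulVecLin] at hinj ⊢
    exact LinearMap.injective_iff_surjective.mp hinj
  obtain ⟨x, hx⟩ := hsurj e
  have hJx : J *ᵥ (B *ᵥ x) = (-1:ℝ)^m • x := by
    apply hinj
    have e1 : (B * J) *ᵥ e = (-1:ℝ)^m • e := by
      rw [hBJ]
      ext i
      simp only [mulVec, dotProduct, e, D, L, mul_diagonal, of_apply]
      simp only [mul_ite, mul_one, mul_zero, sum_ite_eq', mem_univ, if_true, Pi.smul_apply, smul_eq_mul, Fin.val_last]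
      split_ifs with h
      · subst h; simp
      · have : (i:ℕ) < m := by
          have := i.2; have : (i:ℕ) ≠ m := fun h' => h (Fin.ext h')
          omega
        rw [Nat.choose_eq_zero_of_lt this]; simp
    change A *ᵥ _ = A *ᵥ _
    rw [mulVec_smul, hx, ← e1, ← hx, mulVec_mulVec, mulVec_mulVec, mulVec_mulVec]
    congr 1
    have h1 : B * B * (J * B) = B * J := by
      calc _ = B * (B * J * B) := by simp only [mul_assoc]
        _ = _ := by rw [hBJB]
    have h2 : B * (J * B) = J := by rw [← mul_assoc, hBJB]
    have h3 : B * J * (B * B) = J * B := by rw [← mul_assoc, hBJB]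
    rw [mul_assoc A, add_mul, sub_mul, one_mul, h1, h2, mul_add, mul_sub, h3, hBJB, mul_one]
    abel
  have hlast : (B *ᵥ x) (Fin.last m) = x (Fin.last m) := by
    have := congrFun hJx (Fin.last m)
    have e2 : ∀ z, (J *ᵥ z) (Fin.last m) = (-1)^m * z (Fin.last m) := by
      intro z
      simp only [J, D, L, mulVec, dotProduct, diagonal_mul, transpose_apply, of_apply]
      rw [sum_eq_single (Fin.last m)]
      · simp
      · intro k _ hk
        have : (k:ℕ) < m := by
          have := k.2; have : (k:ℕ) ≠ m := fun h' => hk (Fin.ext h')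
          omega
        rw [Fin.val_last, Nat.choose_eq_zero_of_lt this]; simp
      · simp
    rw [e2] at this
    simpa using this
  refine ⟨x, x - B *ᵥ x, ?_, ?_, ?_⟩
  · intro a
    have := congrFun hx a
    simp only [A, add_mulVec, sub_mulVec, one_mulVec, ← mulVec_mulVec, Pi.add_apply, Pi.sub_apply] at this
    change x a - (B *ᵥ (x - B *ᵥ x)) a = _
    rw [mulVec_sub, Pi.sub_apply]
    simp only [e] at this
    linarith
  · intro a
    have := congrFun hx a
    simp only [A, add_mulVec, sub_mulVec, one_mulVec, ← mulVec_mulVec, Pi.add_apply, Pi.sub_apply] at this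
    change (x - B *ᵥ x) a + (B *ᵥ x) a - (B *ᵥ (x - B *ᵥ x)) a = _
    rw [mulVec_sub, Pi.sub_apply, Pi.sub_apply]
    simp only [e] at this
    linarith
  · rw [Pi.sub_apply, hlast, sub_self]
end pascal

/-! ### Nullities at roots of unity -/

section kernel

lemma sum_range_mul_eq {M : Type*} [AddCommMonoid M] (n d : ℕ) (g : ℕ → M) :
    ∑ j ∈ range (n*d), g j = ∑ a ∈ range n, ∑ b ∈ range d, g (a*d+b) := by
  induction n with
  | zero => simp
  | succ n ih => rw [Nat.succ_mul, sum_range_add, ih, sum_range_succ]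

/-- The system of `pascal_system` over `ℂ`, with solutions indexed by all natural numbers. -/
lemma pascal_system' (m : ℕ) : ∃ x y : ℕ → ℂ,
    (∀ a < m+1, x a - ∑ a' ∈ range (m+1), ((a+a').choose a : ℂ) * y a' = if a = m then 1 else 0) ∧
    (∀ a < m+1, y a + ∑ a' ∈ range (m+1), ((a+a').choose a : ℂ) * x a'
      - ∑ a' ∈ range (m+1), ((a+a').choose a : ℂ) * y a' = if a = m then 1 else 0) ∧
    y m = 0 := by
  obtain ⟨x, y, h1, h2, h3⟩ := pascal_system m
  let X : ℕ → ℝ := fun a => if h : a < m+1 then x ⟨a, h⟩ else 0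
  let Y : ℕ → ℝ := fun a => if h : a < m+1 then y ⟨a, h⟩ else 0
  have hX : ∀ a : Fin (m+1), X a = x a := fun a => dif_pos a.2
  have hY : ∀ a : Fin (m+1), Y a = y a := fun a => dif_pos a.2
  simp only [← hX, ← hY] at h1 h2 h3
  refine ⟨fun a => X a, fun a => Y a, ?_, ?_, ?_⟩
  · intro a ha
    have := h1 ⟨a, ha⟩
    rw [Fin.sum_univ_eq_sum_range (fun k => ((a+k).choose a : ℝ) * Y k) (m+1)] at this
    simp only [Fin.ext_iff, Fin.val_last] at this
    have := congrArg (fun t : ℝ => (t:ℂ)) this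
    push_cast at this; rw [this]; split_ifs <;> simp
  · intro a ha
    have := h2 ⟨a, ha⟩
    rw [Fin.sum_univ_eq_sum_range (fun k => ((a+k).choose a : ℝ) * Y k) (m+1),
      Fin.sum_univ_eq_sum_range (fun k => ((a+k).choose a : ℝ) * X k) (m+1)] at this
    simp only [Fin.ext_iff, Fin.val_last] at this
    have := congrArg (fun t : ℝ => (t:ℂ)) this
    push_cast at this; rw [this]; split_ifs <;> simp
  · simpa using h3

variable {q : ℂ} {d m s : ℕ}

/-- Write `Q` for the matrix `q p ^ b [b + b' choose b]_p` of size `d`, and let `Z = Q V` and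
`Q Z = -(V + Z)`, with `V` supported in `[0, s)`. By `q`-Lucas, `1 + Qm` of size `(m + 1) d` maps
`V ⊗ x + Z ⊗ y` to `(V + Z) ⊗ e_m`. Only the columns below `m d + s` matter: `V` vanishes
from `s` on, and `y m = 0`. -/
lemma kernel_core (hp : IsPrimitiveRoot (q^3) d) (hs : s < d) {V Z x y : ℕ → ℂ}
    (hx1 : ∀ a < m+1, x a - ∑ a' ∈ range (m+1), ((a+a').choose a : ℂ) * y a' = if a = m then 1 else 0)
    (hx2 : ∀ a < m+1, y a + ∑ a' ∈ range (m+1), ((a+a').choose a : ℂ) * x a'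
      - ∑ a' ∈ range (m+1), ((a+a').choose a : ℂ) * y a' = if a = m then 1 else 0)
    (hx3 : y m = 0)
    (hV : ∀ b, s ≤ b → b < d → V b = 0)
    (hZ : ∀ b < d, ∑ b' ∈ range d, q * (q^3)^b * gb (q^3) b b' * V b' = Z b)
    (hZ2 : ∀ b < d, ∑ b' ∈ range d, q * (q^3)^b * gb (q^3) b b' * Z b' = -(V b + Z b))
    (i : ℕ) (hi : i < (m+1)*d) :
    (V (i%d) * x (i/d) + Z (i%d) * y (i/d)) + ∑ j ∈ range (m*d+s), q * (q^3)^i * gb (q^3) i j *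
      (V (j%d) * x (j/d) + Z (j%d) * y (j/d)) = (V (i%d) + Z (i%d)) * if i/d = m then 1 else 0 := by
  set p := q^3 with hpdef
  have hd : 0 < d := by omega
  have ha : i / d < m + 1 := by rwa [Nat.div_lt_iff_lt_mul hd]
  have hb : i % d < d := Nat.mod_lt _ hd
  have ext : ∑ j ∈ range (m*d+s), q * p^i * gb p i j * (V (j%d) * x (j/d) + Z (j%d) * y (j/d)) =
      ∑ j ∈ range ((m+1)*d), q * p^i * gb p i j * (V (j%d) * x (j/d) + Z (j%d) * y (j/d)) := by
    apply Finset.sum_subset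
    · intro j; simp only [mem_range, Nat.succ_mul]; omega
    · intro j hj hj'
      simp only [mem_range, not_lt, Nat.succ_mul] at hj hj'
      have e1 : j / d = m := by
        rw [Nat.div_eq_iff hd]; constructor <;> [skip; skip] <;> omega
      have e2 : m * d + j % d = j := by rw [← e1, mul_comm]; exact Nat.div_add_mod j d
      rw [e1, hx3, hV (j % d) (by omega) (Nat.mod_lt _ hd)]; simp
  have hi' : i / d * d + i % d = i := by rw [mul_comm]; exact Nat.div_add_mod i d
  set a := i / d
  set b := i % d
  rw [ext, sum_range_mul_eq]
  have e3 : ∀ a' b' : ℕ, b' < d → q * p^i * gb p i (a'*d+b') * (V ((a'*d+b')%d) * x ((a'*d+b')/d)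
      + Z ((a'*d+b')%d) * y ((a'*d+b')/d)) = ((a+a').choose a * x a') * (q * p^b * gb p b b' * V b')
        + ((a+a').choose a * y a') * (q * p^b * gb p b b' * Z b') := by
    intro a' b' hb'
    have f1 : (a'*d+b')%d = b' := by rw [Nat.mul_add_mod_self_right, Nat.mod_eq_of_lt hb']
    have f2 : (a'*d+b')/d = a' := by
      rw [mul_comm, Nat.mul_add_div hd, Nat.div_eq_of_lt hb', add_zero]
    have f3 : p ^ i = p ^ b := by
      rw [← hi', pow_add, mul_comm, mul_comm a, pow_mul, hp.pow_eq_one, one_pow, mul_one]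
    rw [f1, f2, f3]
    conv_lhs => rw [← hi']
    rw [gb_lucas hp _ a a' b b' rfl hb hb']; ring
  have e4 : ∑ a' ∈ range (m+1), ∑ b' ∈ range d, q * p^i * gb p i (a'*d+b') *
      (V ((a'*d+b')%d) * x ((a'*d+b')/d) + Z ((a'*d+b')%d) * y ((a'*d+b')/d)) =
      (∑ a' ∈ range (m+1), ((a+a').choose a : ℂ) * x a') * Z b
       - (∑ a' ∈ range (m+1), ((a+a').choose a : ℂ) * y a') * (V b + Z b) := by
    rw [sum_mul, sum_mul, ← sum_sub_distrib]
    refine sum_congr rfl fun a' _ => ?_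
    rw [sum_congr rfl fun b' hb' => e3 a' b' (mem_range.mp hb'), sum_add_distrib, ← mul_sum,
      ← mul_sum, hZ b hb, hZ2 b hb]
    ring
  rw [e4]
  linear_combination V b * hx1 a ha + Z b * hx2 a ha
end kernel

/-- The matrix `q p ^ i [i + j choose i]_p` of size `r`, where `p = q ^ 3`. -/
def Qm {R : Type*} [CommRing R] (q : R) (r : ℕ) : Matrix (Fin r) (Fin r) R :=
  Matrix.of fun i j => q * (q^3) ^ (i:ℕ) * gb (q^3) i j

section kernel
variable {q : ℂ} {d m s : ℕ}
open Matrix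

/-- Every `v` supported in the first `min (s, d - s)` coordinates with `(1 + Q + Q²) v = 0` yields a
kernel vector of `1 + Qm`, by `kernel_core`: the remaining part of the image is `v + Q v = -Q² v`,
which vanishes in the coordinates below `s` by the zero pattern of `Q²`. -/
lemma nullity_ge (hp : IsPrimitiveRoot (q^3) d) (hs : s < d) :
    min s (d - s) ≤ Module.finrank ℂ (LinearMap.ker (1 + Qm q (m*d+s)).mulVecLin)
      + (1 + q • Tm (q^3) d + (q • Tm (q^3) d) * (q • Tm (q^3) d)).rank := by
  obtain ⟨x, y, hx1, hx2, hx3⟩ := pascal_system' m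
  have hd : 0 < d := by omega
  set μ := min s (d - s) with hμ
  set Q := q • Tm (q^3) d with hQ
  have hQ3 : Q * (Q * Q) = 1 := by
    rw [← Tm_cube hp hd, hQ]
    simp only [smul_mul_assoc, mul_smul_comm, smul_smul]
    congr 1; ring
  let E : (Fin μ → ℂ) →ₗ[ℂ] (Fin d → ℂ) :=
    { toFun := fun u b => if h : (b:ℕ) < μ then u ⟨b, h⟩ else 0
      map_add' := fun u v => by ext b; simp only [Pi.add_apply]; split_ifs <;> simp
      map_smul' := fun c u => by ext b; simp only [Pi.smul_apply]; split_ifs <;> simp }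
  let W : (Fin d → ℂ) →ₗ[ℂ] (Fin (m*d+s) → ℂ) :=
    { toFun := fun v i => v ⟨(i:ℕ) % d, Nat.mod_lt _ hd⟩ * x ((i:ℕ)/d)
        + (Q *ᵥ v) ⟨(i:ℕ) % d, Nat.mod_lt _ hd⟩ * y ((i:ℕ)/d)
      map_add' := fun u v => by ext b; simp only [mulVec_add, Pi.add_apply]; ring
      map_smul' := fun c u => by ext b; simp only [mulVec_smul, Pi.smul_apply, smul_eq_mul, RingHom.id_apply]; ring }
  let M := 1 + Q + Q * Q
  let G := M.mulVecLin ∘ₗ E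
  have hG : μ ≤ Module.finrank ℂ (LinearMap.ker G) + M.rank := by
    have h1 := G.finrank_range_add_finrank_ker
    rw [Module.finrank_fin_fun] at h1
    have h2 : Module.finrank ℂ (LinearMap.range G) ≤ M.rank :=
      Submodule.finrank_mono (LinearMap.range_comp_le_range _ _)
    omega
  -- the residual identity, valid for all `i < (m + 1) d`
  have core : ∀ u, G u = 0 → ∀ i < (m+1)*d, ∀ v, v = E u →
      (v ⟨i % d, Nat.mod_lt _ hd⟩ * x (i/d) + (Q *ᵥ v) ⟨i % d, Nat.mod_lt _ hd⟩ * y (i/d)) +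
      ∑ j : Fin (m*d+s), (q * (q^3)^i * gb (q^3) i j) * W v j
      = (v ⟨i % d, Nat.mod_lt _ hd⟩ + (Q *ᵥ v) ⟨i % d, Nat.mod_lt _ hd⟩) * if i/d = m then 1 else 0 := by
    intro u hu i hi v hv
    let V : ℕ → ℂ := fun b => if h : b < d then v ⟨b, h⟩ else 0
    let Z : ℕ → ℂ := fun b => if h : b < d then (Q *ᵥ v) ⟨b, h⟩ else 0
    have hVe : ∀ b (h : b < d), V b = v ⟨b, h⟩ := fun b h => by simp [V, h]
    have hZe : ∀ b (h : b < d), Z b = (Q *ᵥ v) ⟨b, h⟩ := fun b h => by simp [Z, h]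
    have hGv : v + Q *ᵥ v + Q *ᵥ (Q *ᵥ v) = 0 := by
      have : M *ᵥ v = 0 := by rw [hv]; exact hu
      simpa only [M, add_mulVec, one_mulVec, mulVec_mulVec] using this
    have act : ∀ (f : Fin d → ℂ) (F : ℕ → ℂ), (∀ b (h : b < d), F b = f ⟨b, h⟩) →
        ∀ b (h : b < d), ∑ b' ∈ range d, q * (q^3)^b * gb (q^3) b b' * F b' = (Q *ᵥ f) ⟨b, h⟩ := by
      intro f F hF b h
      rw [← Fin.sum_univ_eq_sum_range (fun b' => q * (q^3)^b * gb (q^3) b b' * F b')]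
      simp only [mulVec, dotProduct, hQ, Tm, Matrix.smul_apply, of_apply, smul_eq_mul]
      refine sum_congr rfl fun b' _ => ?_
      rw [hF b' b'.2]; ring
    have := kernel_core (q := q) (s := s) (V := V) (Z := Z) hp hs hx1 hx2 hx3 ?_ ?_ ?_ i hi
    · rw [hVe _ (Nat.mod_lt _ hd), hZe _ (Nat.mod_lt _ hd)] at this
      rw [← this, ← Fin.sum_univ_eq_sum_range (fun j => q * (q^3)^i * gb (q^3) i j *
      (V (j%d) * x (j/d) + Z (j%d) * y (j/d)))]
      congr 1
      refine sum_congr rfl fun j _ => ?_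
      rw [hVe _ (Nat.mod_lt _ hd), hZe _ (Nat.mod_lt _ hd)]; rfl
    · intro b h1 h2
      rw [hVe b h2, hv]
      simp only [E, LinearMap.coe_mk, AddHom.coe_mk]
      rw [dif_neg (by omega)]
    · intro b h; rw [act v V hVe b h, hZe b h]
    · intro b h
      rw [act (Q *ᵥ v) Z hZe b h, hVe b h, hZe b h]
      have := congrFun hGv ⟨b, h⟩
      simp only [Pi.add_apply, Pi.zero_apply] at this
      linear_combination this
  have hEinj : ∀ u, E u = 0 → u = 0 := by
    intro u hu
    ext b
    have := congrFun hu ⟨b, by omega⟩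
    simpa [E] using this
  have hker : ∀ u, G u = 0 → (1 + Qm q (m*d+s)) *ᵥ (W (E u)) = 0 := by
    intro u hu
    ext i
    have h := core u hu i (by have := i.2; rw [Nat.succ_mul]; omega) (E u) rfl
    rw [add_mulVec, one_mulVec, Pi.add_apply]
    refine h.trans ?_
    rw [Pi.zero_apply]
    split_ifs with him
    · have hGv : E u + Q *ᵥ (E u) + (Q * Q) *ᵥ (E u) = 0 := by
        have : M *ᵥ (E u) = 0 := hu
        simpa only [M, add_mulVec, one_mulVec] using this
      have h1 := congrFun hGv ⟨(i:ℕ) % d, Nat.mod_lt _ hd⟩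
      simp only [Pi.add_apply, Pi.zero_apply] at h1
      have h2 : ((Q * Q) *ᵥ (E u)) ⟨(i:ℕ) % d, Nat.mod_lt _ hd⟩ = 0 := by
        rw [mulVec, dotProduct]
        refine sum_eq_zero fun b' _ => ?_
        by_cases hb' : (b':ℕ) < μ
        · rw [hQ, smul_mul_smul_comm, Matrix.smul_apply, Tm_sq_eq_zero hp]
          · simp
          · simp only
            have := i.2
            have e2 : m * d + i % d = i := by
              have h3 := Nat.div_add_mod (i:ℕ) d
              rwa [him, mul_comm] at h3
            omega
        · simp [E, hb']
      rw [h2, add_zero] at h1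
      rw [h1, zero_mul]
    · rw [mul_zero]
  have hinj : ∀ u, G u = 0 → W (E u) = 0 → u = 0 := by
    intro u hu hW
    have h1 : E u + Q *ᵥ (E u) = 0 := by
      ext b
      have hb : (m * d + b) % d = b := by rw [Nat.mul_add_mod_self_right, Nat.mod_eq_of_lt b.2]
      have hm : (m * d + b) / d = m := by
        rw [mul_comm, Nat.mul_add_div hd, Nat.div_eq_of_lt b.2, add_zero]
      have h := core u hu (m*d+b) (by rw [Nat.succ_mul]; omega) (E u) rfl
      rw [hW] at h
      simp only [hb, hm, hx3, Pi.zero_apply, mul_zero, sum_const_zero, if_true, add_zero, mul_one] at h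
      rw [Pi.add_apply, Pi.zero_apply, ← h]
      by_cases hbs : (b:ℕ) < s
      · have := congrFun hW ⟨m*d+b, by omega⟩
        simpa [W, hb, hm, hx3] using this
      · simp only [E, LinearMap.coe_mk, AddHom.coe_mk]
        rw [dif_neg (by omega), zero_mul]
    have hGv : E u + Q *ᵥ (E u) + (Q * Q) *ᵥ (E u) = 0 := by
      have : M *ᵥ (E u) = 0 := hu
      simpa only [M, add_mulVec, one_mulVec] using this
    rw [h1, zero_add] at hGv
    apply hEinj
    have := congrArg (fun v => Q *ᵥ v) hGv
    simpa only [mulVec_mulVec, hQ3, one_mulVec, mulVec_zero] using this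
  have : Module.finrank ℂ (LinearMap.ker G) ≤
      Module.finrank ℂ (LinearMap.ker (1 + Qm q (m*d+s)).mulVecLin) := by
    let Φ : LinearMap.ker G →ₗ[ℂ] LinearMap.ker (1 + Qm q (m*d+s)).mulVecLin :=
      ((W ∘ₗ E).comp (LinearMap.ker G).subtype).codRestrict _ (fun u => hker u.1 u.2)
    apply LinearMap.finrank_le_finrank_of_injective (f := Φ)
    rw [injective_iff_map_eq_zero]
    intro u hu
    apply Subtype.ext
    exact hinj u.1 u.2 (congrArg Subtype.val hu)
  exact hG.trans (Nat.add_le_add_right this _)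

end kernel

section

open Matrix

/-- The rank of an idempotent is its trace, here for `N / 3`. -/
lemma rank_of_idem {d : ℕ} (N : Matrix (Fin d) (Fin d) ℂ) (h : N * N = (3:ℂ) • N) :
    (N.rank : ℂ) = N.trace / 3 := by
  set e : Matrix (Fin d) (Fin d) ℂ := (3:ℂ)⁻¹ • N with he
  have hid : IsIdempotentElem e := by
    rw [IsIdempotentElem, he, smul_mul_smul_comm, h, smul_smul]; congr 1; norm_num
  have hid' : IsIdempotentElem (Matrix.toLin' e) := by
    change Matrix.toLin' e ∘ₗ Matrix.toLin' e = _
    rw [← Matrix.toLin'_mul, hid.eq]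
  have h1 := (LinearMap.IsIdempotentElem.isProj_range _ hid').trace
  have h2 : LinearMap.range (Matrix.toLin' e) = LinearMap.range N.mulVecLin := by
    rw [he, map_smul, ← Matrix.toLin'_apply', LinearMap.range_smul _ _ (by norm_num)]
  rw [Matrix.trace_toLin'_eq, h2, he, Matrix.trace_smul, smul_eq_mul] at h1
  rw [Matrix.rank, ← h1]; ring

/-- Sum of `nullity_ge` over the three cube roots of `p`: the three matrices `(1 + Q + Q²) / 3` are
idempotents with sum `1`, so that their ranks add up to `d`. -/
lemma nullity_sum {p q ω : ℂ} {d m s : ℕ} (hp : IsPrimitiveRoot p d) (hs : s < d)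
    (hq : q ^ 3 = p) (hω : IsPrimitiveRoot ω 3) :
    3 * min s (d - s) ≤ d + ∑ k ∈ range 3,
      Module.finrank ℂ (LinearMap.ker (1 + Qm (ω ^ k * q) (m*d+s)).mulVecLin) := by
  have hd : 0 < d := by omega
  have hω3 : ω ^ 3 = 1 := hω.pow_eq_one
  have hω1 : 1 + ω + ω ^ 2 = 0 := by
    have := hω.geom_sum_eq_zero (by norm_num)
    simpa [sum_range_succ] using this
  have hq3 : ∀ k, (ω ^ k * q) ^ 3 = p := fun k => by
    rw [mul_pow, hq, ← pow_mul, mul_comm k, pow_mul, hω3, one_pow, one_mul]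
  have hn : ∀ k, _ := fun k => nullity_ge (q := ω ^ k * q) (m := m) (s := s) (by rw [hq3]; exact hp) hs
  simp only [hq3] at hn
  set N : ℕ → Matrix (Fin d) (Fin d) ℂ := fun k =>
    1 + (ω ^ k * q) • Tm p d + ((ω ^ k * q) • Tm p d) * ((ω ^ k * q) • Tm p d) with hN
  have hcube : ∀ k, ((ω ^ k * q) • Tm p d) * (((ω ^ k * q) • Tm p d) * ((ω ^ k * q) • Tm p d)) = 1 := by
    intro k
    rw [← Tm_cube hp hd, ← hq3 k]
    simp only [smul_mul_assoc, mul_smul_comm, smul_smul]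
    congr 1; ring
  have hrank : ∀ k, ((N k).rank : ℂ) = (N k).trace / 3 := by
    intro k
    apply rank_of_idem
    have hc := hcube k
    simp only [hN]
    set Q := (ω ^ k * q) • Tm p d
    have h4 : Q * Q * (Q * Q) = Q := by
      rw [mul_assoc, hc, mul_one]
    have h3 : Q * Q * Q = 1 := by rw [mul_assoc, hc]
    rw [add_mul, add_mul, mul_add, mul_add, mul_add, mul_add, mul_add, mul_add, h4, h3, hc]
    simp only [mul_one, one_mul]
    module
  have hsum : N 0 + N 1 + N 2 = (3:ℂ) • 1 := by
    simp only [hN, smul_mul_smul_comm]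
    have h1 : ω ^ 0 * q + ω ^ 1 * q + ω ^ 2 * q = 0 := by linear_combination q * hω1
    have h2 : ω ^ 0 * q * (ω ^ 0 * q) + ω ^ 1 * q * (ω ^ 1 * q) + ω ^ 2 * q * (ω ^ 2 * q) = 0 := by
      linear_combination q^2 * hω1 + q^2 * ω * hω3
    have : ∀ (a b c a' b' c' : ℂ) (T T' : Matrix (Fin d) (Fin d) ℂ), a + b + c = 0 → a' + b' + c' = 0 →
      (1 + a • T + a' • T') + (1 + b • T + b' • T') + (1 + c • T + c' • T') = (3:ℂ) • (1 : Matrix (Fin d) (Fin d) ℂ) := by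
      intro a b c a' b' c' T T' h h'
      have e1 : (a + b + c) • T = 0 := by rw [h, zero_smul]
      have e2 : (a' + b' + c') • T' = 0 := by rw [h', zero_smul]
      calc _ = (3:ℂ) • (1 : Matrix (Fin d) (Fin d) ℂ) + ((a + b + c) • T + (a' + b' + c') • T') := by module
        _ = _ := by rw [e1, e2]; simp
    exact this _ _ _ _ _ _ _ _ h1 h2
  have hr : (N 0).rank + (N 1).rank + (N 2).rank = d := by
    have := congrArg trace hsum
    rw [trace_add, trace_add, trace_smul, trace_one, Fintype.card_fin, smul_eq_mul] at this
    have h2 : ((N 0).rank : ℂ) + (N 1).rank + (N 2).rank = d := by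
      rw [hrank, hrank, hrank]; linear_combination this / 3
    exact_mod_cast h2
  have h0 := hn 0
  have h1 := hn 1
  have h2 := hn 2
  change _ ≤ _ + (N 0).rank at h0
  change _ ≤ _ + (N 1).rank at h1
  change _ ≤ _ + (N 2).rank at h2
  simp only [sum_range_succ, range_zero, sum_empty]
  omega

end

/-! ### Order of vanishing of a polynomial determinant -/

section

section map
variable {R S : Type*} [CommRing R] [CommRing S] (f : R →+* S)

lemma map_uq (p : R) : ∀ n k, f (uq p n k) = uq (f p) n k
  | n, 0 => by simp [uq_zero_right]
  | 0, k+1 => by simp [uq]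
  | n+1, k+1 => by rw [uq_succ, uq_succ, map_add, map_mul, map_uq p n, map_uq p n, map_pow]

lemma map_gb (p : R) (i j : ℕ) : f (gb p i j) = gb (f p) i j := by
  simp [gb, map_sum, map_uq]

lemma map_Qm (q : R) (r : ℕ) : (Qm q r).map f = Qm (f q) r := by
  ext i j; simp [Qm, map_gb]

lemma map_one_add_Qm (q : R) (r : ℕ) : (1 + Qm q r).map f = 1 + Qm (f q) r := by
  rw [Matrix.map_add _ (map_add f), map_Qm, Matrix.map_one _ (map_zero f) (map_one f)]
end map

open Matrix Polynomial

lemma pow_dvd_det {n : ℕ} {R : Type*} [CommRing R] (N : Matrix (Fin n) (Fin n) R) (c : R)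
    (S : Finset (Fin n)) (h : ∀ j ∈ S, ∀ i, c ∣ N i j) : c ^ #S ∣ N.det := by
  rw [Matrix.det_apply]
  refine Finset.dvd_sum fun σ _ => ?_
  refine Dvd.dvd.trans ?_ (dvd_smul_of_dvd _ dvd_rfl)
  rw [← Finset.prod_const]
  exact (Finset.prod_dvd_prod_of_dvd _ _ fun j hj => h j hj _).trans
    (Finset.prod_dvd_prod_of_subset _ _ _ (Finset.subset_univ S))

/-- The order of vanishing of a polynomial determinant is at least the nullity. -/
lemma pow_nullity_dvd_det {n : ℕ} (M : Matrix (Fin n) (Fin n) ℂ[X]) (a : ℂ) :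
    (X - C a) ^ (Module.finrank ℂ (LinearMap.ker (M.map (evalRingHom a)).mulVecLin)) ∣ M.det := by
  set A := M.map (evalRingHom a) with hA
  obtain ⟨L, L', D, hD⟩ := Matrix.Pivot.exists_list_transvec_mul_mul_list_transvec_eq_diagonal A
  set P := (L.map TransvectionStruct.toMatrix).prod with hP
  set P' := (L'.map TransvectionStruct.toMatrix).prod with hP'
  have dP : P.det = 1 := TransvectionStruct.det_toMatrix_prod L
  have dP' : P'.det = 1 := TransvectionStruct.det_toMatrix_prod L'
  let S : Finset (Fin n) := univ.filter fun i => D i = 0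
  have hcard : Module.finrank ℂ (LinearMap.ker A.mulVecLin) = #S := by
    have h1 := A.mulVecLin.finrank_range_add_finrank_ker
    rw [Module.finrank_fin_fun] at h1
    have h2 : A.rank = Fintype.card {i // D i ≠ 0} := by
      rw [← Matrix.rank_diagonal, ← hD, Matrix.rank_mul_eq_left_of_isUnit_det,
        Matrix.rank_mul_eq_right_of_isUnit_det] <;> simp [dP, dP']
    have h3 : Fintype.card {i // D i ≠ 0} + #S = n := by
      rw [Fintype.card_subtype, add_comm]
      simpa using Finset.card_filter_add_card_filter_not (s := (univ : Finset (Fin n))) (fun i => D i = 0)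
    change A.rank + _ = n at h1
    omega
  have hdet : (P.map C * M * P'.map C).det = M.det := by
    rw [det_mul, det_mul]
    have e1 : (P.map C).det = 1 := by
      have := (RingHom.map_det (C : ℂ →+* ℂ[X]) P).symm
      rw [dP, map_one] at this; exact this
    have e2 : (P'.map C).det = 1 := by
      have := (RingHom.map_det (C : ℂ →+* ℂ[X]) P').symm
      rw [dP', map_one] at this; exact this
    rw [e1, e2]; ring
  rw [hcard, ← hdet]
  apply pow_dvd_det
  intro j hj i
  rw [dvd_iff_isRoot, IsRoot.def]
  have e3 : (P.map C * M * P'.map C).map (evalRingHom a) = diagonal D := by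
    rw [Matrix.map_mul, Matrix.map_mul, ← hA, ← hD]
    congr 1
    · congr 1; ext i j; simp
    · ext i j; simp
  have := congrFun (congrFun e3 i) j
  rw [map_apply, coe_evalRingHom] at this
  rw [this, diagonal_apply]
  simp only [S, mem_filter, mem_univ, true_and] at hj
  split_ifs with h
  · rw [h, hj]
  · rfl

end

/-! ### The roots of the determinant -/

section counting

/-- Double counting of `∑ φ(d)` over `d ∣ j ≤ i`, using `∑_{d ∣ j} φ(d) = j`. -/
lemma sum_totient_div (N : ℕ) : ∀ i ≤ N, 2 * ∑ d ∈ Icc 1 N, Nat.totient d * (i / d) = i * (i+1) := by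
  intro i
  induction i with
  | zero => simp
  | succ i ih =>
    intro hi
    have h : ∑ d ∈ Icc 1 N, Nat.totient d * ((i+1) / d) =
        ∑ d ∈ Icc 1 N, Nat.totient d * (i / d) + (i+1) := by
      have e : ∑ d ∈ Icc 1 N, (if d ∣ i+1 then Nat.totient d else 0) = i + 1 := by
        rw [← sum_filter]
        refine Eq.trans ?_ (Nat.sum_totient (i+1))
        refine sum_congr ?_ fun _ _ => rfl
        ext d
        simp only [mem_filter, mem_Icc, Nat.mem_divisors]
        constructor
        · rintro ⟨_, h⟩; exact ⟨h, by omega⟩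
        · rintro ⟨h, _⟩
          exact ⟨⟨Nat.pos_of_dvd_of_pos h (by omega), (Nat.le_of_dvd (by omega) h).trans hi⟩, h⟩
      refine Eq.trans ?_ (congrArg _ e)
      rw [← sum_add_distrib]
      refine sum_congr rfl fun d _ => ?_
      rw [Nat.succ_div]
      split_ifs <;> ring
    rw [h, mul_add, ih (by omega)]; ring

lemma sum_totient_sum_div (N : ℕ) (n : ℕ) (hn : n ≤ N + 1) :
    6 * (∑ d ∈ Icc 1 N, (Nat.totient d : ℤ) * ∑ i ∈ range n, ((i / d : ℕ) : ℤ)) = n^3 - n := by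
  have : ∑ d ∈ Icc 1 N, (Nat.totient d : ℤ) * ∑ i ∈ range n, ((i / d : ℕ) : ℤ) =
      ∑ i ∈ range n, ∑ d ∈ Icc 1 N, (Nat.totient d : ℤ) * ((i / d : ℕ) : ℤ) := by
    rw [sum_comm]; simp only [mul_sum]
  rw [this]
  clear this
  induction n with
  | zero => simp
  | succ n ih =>
    rw [sum_range_succ, mul_add, ih (by omega)]
    have := sum_totient_div N n (by omega)
    have h2 : 2 * ∑ d ∈ Icc 1 N, (Nat.totient d : ℤ) * ((n / d : ℕ) : ℤ) = n * (n + 1) := by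
      exact_mod_cast this
    push_cast at h2 ⊢
    linear_combination 3 * h2

lemma sum_div_closed (d a s : ℕ) (hs : s < d) :
    2 * ∑ i ∈ range (a*d+s), ((i / d : ℕ) : ℤ) = a * (a*d + 2*s - d) := by
  have hd : 0 < d := by omega
  have e : ∀ a b : ℕ, b < d → (a*d+b)/d = a := fun a b hb => by
    rw [mul_comm, Nat.mul_add_div hd, Nat.div_eq_of_lt hb, add_zero]
  rw [sum_range_add, sum_range_mul_eq]
  rw [sum_congr rfl fun i hi => by rw [sum_congr rfl fun b hb => by rw [e i b (mem_range.mp hb)]]]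
  rw [sum_congr rfl (s₁ := range s) fun b hb => by rw [e a b (by have := mem_range.mp hb; omega)]]
  simp only [sum_const, card_range, nsmul_eq_mul, ← mul_sum]
  have : ∀ a : ℕ, 2 * ∑ i ∈ range a, (i:ℤ) = a * (a - 1) := by
    intro a
    induction a with
    | zero => simp
    | succ a ih => rw [sum_range_succ, mul_add, ih]; push_cast; ring
  linear_combination (d:ℤ) * this a

/-- The truncated difference on the left is a combination of sums of `⌊i / d⌋`: it is the exponent of
the `d`-th cyclotomic polynomial in a quotient of products of `q`-factorials. -/
lemma three_min_sub (d r : ℕ) (hd : 0 < d) :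
    ((3 * min (r % d) (d - r % d) - d : ℕ) : ℤ) =
      3 * ∑ i ∈ range r, ((i / d : ℕ) : ℤ) - 3 * ∑ i ∈ range (2*r), ((i / d : ℕ) : ℤ)
        + ∑ i ∈ range (3*r), ((i / d : ℕ) : ℤ) := by
  obtain ⟨m, s, hs, hr, hm⟩ : ∃ m s, s < d ∧ r = m * d + s ∧ r % d = s :=
    ⟨r / d, r % d, Nat.mod_lt _ hd, by rw [mul_comm]; exact (Nat.div_add_mod r d).symm, rfl⟩
  rw [hm]
  have h1 := sum_div_closed d m s hs
  rw [← hr] at h1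
  have h2 : ∃ a t, t < d ∧ a * d + t = 2 * r ∧ ((2*s < d ∧ a = 2*m ∧ t = 2*s) ∨ (d ≤ 2*s ∧ a = 2*m+1 ∧ t + d = 2*s)) := by
    by_cases h : 2*s < d
    · exact ⟨2*m, 2*s, h, by rw [hr]; ring, Or.inl ⟨h, rfl, rfl⟩⟩
    · refine ⟨2*m+1, 2*s-d, by omega, ?_, Or.inr ⟨by omega, rfl, by omega⟩⟩
      rw [hr]; have : (2*m+1)*d = 2*(m*d) + d := by ring
      omega
  have h3 : ∃ a t, t < d ∧ a * d + t = 3 * r ∧ ((3*s < d ∧ a = 3*m ∧ t = 3*s) ∨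
      (d ≤ 3*s ∧ 3*s < 2*d ∧ a = 3*m+1 ∧ t + d = 3*s) ∨ (2*d ≤ 3*s ∧ a = 3*m+2 ∧ t + 2*d = 3*s)) := by
    by_cases h : 3*s < d
    · exact ⟨3*m, 3*s, h, by rw [hr]; ring, Or.inl ⟨h, rfl, rfl⟩⟩
    · by_cases h' : 3*s < 2*d
      · refine ⟨3*m+1, 3*s-d, by omega, ?_, Or.inr (Or.inl ⟨by omega, h', rfl, by omega⟩)⟩
        rw [hr]; have : (3*m+1)*d = 3*(m*d) + d := by ring
        omega
      · refine ⟨3*m+2, 3*s-2*d, by omega, ?_, Or.inr (Or.inr ⟨by omega, rfl, by omega⟩)⟩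
        rw [hr]; have : (3*m+2)*d = 3*(m*d) + 2*d := by ring
        omega
  obtain ⟨a2, t2, ht2, e2, c2⟩ := h2
  obtain ⟨a3, t3, ht3, e3, c3⟩ := h3
  have k2 := sum_div_closed d a2 t2 ht2
  have k3 := sum_div_closed d a3 t3 ht3
  rw [e2] at k2
  rw [e3] at k3
  have key : ∀ g : ℤ, 2 * g = 3 * (m * (m*d+2*s-d)) - 3 * (a2 * (a2*d+2*t2-d)) + a3*(a3*d+2*t3-d) →
    g = 3 * ∑ i ∈ range r, ((i / d : ℕ) : ℤ) - 3 * ∑ i ∈ range (2*r), ((i / d : ℕ) : ℤ)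
        + ∑ i ∈ range (3*r), ((i / d : ℕ) : ℤ) := by
    intro g hg
    rw [← h1, ← k2, ← k3] at hg
    linarith
  apply key
  rcases c2 with ⟨c, rfl, rfl⟩ | ⟨c, rfl, ht⟩ <;> rcases c3 with ⟨c', rfl, rfl⟩ | ⟨c', c'', rfl, ht'⟩ | ⟨c', rfl, ht'⟩
  all_goals first | (exfalso; omega) | skip
  · rw [show 3 * min s (d-s) - d = 0 by omega]; push_cast; ring
  · have : ((3 * min s (d-s) - d : ℕ) : ℤ) = 3*s - d := by omega
    rw [this]
    have ht'' : (t3:ℤ) = 3*s - d := by omega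
    rw [ht'']; push_cast; ring
  · have : ((3 * min s (d-s) - d : ℕ) : ℤ) = 2*d - 3*s := by omega
    rw [this]
    have ht'' : (t3:ℤ) = 3*s - d := by omega
    have ht3 : (t2:ℤ) = 2*s - d := by omega
    rw [ht'', ht3]; push_cast; ring
  · rw [show 3 * min s (d-s) - d = 0 by omega]
    have ht'' : (t3:ℤ) = 3*s - 2*d := by omega
    have ht3 : (t2:ℤ) = 2*s - d := by omega
    rw [ht'', ht3]; push_cast; ring

/-- The total number of roots of unity found, counted with multiplicity, is `r ^ 3`. -/
lemma sum_totient_three_min (r : ℕ) :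
    ∑ d ∈ Icc 1 (3*r), Nat.totient d * (3 * min (r % d) (d - r % d) - d) = r^3 := by
  have h1 := sum_totient_sum_div (3*r) r (by omega)
  have h2 := sum_totient_sum_div (3*r) (2*r) (by omega)
  have h3 := sum_totient_sum_div (3*r) (3*r) (by omega)
  have : (∑ d ∈ Icc 1 (3*r), (Nat.totient d : ℤ) * ((3 * min (r % d) (d - r % d) - d : ℕ) : ℤ)) = r^3 := by
    rw [sum_congr rfl fun d hd => by rw [three_min_sub d r (mem_Icc.mp hd).1]]
    simp only [mul_sub, mul_add, sum_add_distrib, sum_sub_distrib, mul_left_comm _ (3:ℤ)]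
    rw [← mul_sum, ← mul_sum]
    push_cast at *
    linarith
  exact_mod_cast this
end counting

section

open Polynomial

lemma nullity_sum_ge {p q ω : ℂ} {d r : ℕ} (hd : 0 < d) (hp : IsPrimitiveRoot p d)
    (hq : q ^ 3 = p) (hω : IsPrimitiveRoot ω 3) :
    3 * min (r % d) (d - r % d) - d ≤ ∑ k ∈ range 3,
      Module.finrank ℂ (LinearMap.ker (1 + Qm (ω ^ k * q) r).mulVecLin) := by
  have h := nullity_sum (m := r / d) (s := r % d) hp (Nat.mod_lt _ hd) hq hω
  rw [show r / d * d + r % d = r by rw [mul_comm]; exact Nat.div_add_mod r d] at h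
  omega

/-- All roots of the determinant are roots of unity of order at most `9 r`, and there
are `r ^ 3` of them. -/
lemma roots_structure (r : ℕ) (P : ℂ[X]) (hP : P = (1 + Qm (X : ℂ[X]) r).det) (h0 : P ≠ 0)
    (hdeg : P.natDegree ≤ r^3) :
    Multiset.card P.roots = r^3 ∧ ∀ ζ ∈ P.roots, ∃ d ∈ Icc 1 (3*r), ζ ^ (3*d) = 1 := by
  have hcr : ∀ p : ℂ, ∃ q : ℂ, q ^ 3 = p := fun p => IsAlgClosed.exists_pow_nat_eq p (by norm_num)
  choose cr hcr using hcr
  obtain ⟨ω, hω⟩ : ∃ ω : ℂ, IsPrimitiveRoot ω 3 := ⟨_, Complex.isPrimitiveRoot_exp 3 (by norm_num)⟩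
  have hω3 : ω ^ 3 = 1 := hω.pow_eq_one
  have hq3 : ∀ p k, (ω ^ k * cr p) ^ 3 = p := fun p k => by
    rw [mul_pow, hcr, ← pow_mul, mul_comm k, pow_mul, hω3, one_pow, one_mul]
  let I : Finset (Σ _ : ℕ, ℂ × ℕ) := (Icc 1 (3*r)).sigma fun d => primitiveRoots d ℂ ×ˢ range 3
  let f : (Σ _ : ℕ, ℂ × ℕ) → ℂ := fun t => ω ^ t.2.2 * cr t.2.1
  have hinj : Set.InjOn f I := by
    rintro ⟨d, p, k⟩ ht ⟨d', p', k'⟩ ht' h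
    simp only [I, mem_coe, mem_sigma, mem_product, mem_range, mem_Icc] at ht ht'
    simp only [f] at h
    have e1 : p = p' := by rw [← hq3 p k, h, hq3]
    subst e1
    have hp := (mem_primitiveRoots (by omega)).mp ht.2.1
    have hp' := (mem_primitiveRoots (by omega)).mp ht'.2.1
    have e2 : d = d' := hp.unique hp'
    subst e2
    have hc0 : cr p ≠ 0 := by
      intro hc
      have := hcr p
      rw [hc] at this
      exact hp.ne_zero (by omega) (by rw [← this]; simp)
    have e3 : ω ^ k = ω ^ k' := mul_right_cancel₀ hc0 h
    have e4 : k = k' := hω.pow_inj ht.2.2 ht'.2.2 e3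
    subst e4; rfl
  let S := I.image f
  have hge : r^3 ≤ ∑ ζ ∈ S, P.roots.count ζ := by
    rw [sum_image hinj, sum_sigma, ← sum_totient_three_min r]
    refine sum_le_sum fun d hd => ?_
    have hd1 := (mem_Icc.mp hd).1
    rw [sum_product, ← Complex.card_primitiveRoots, ← smul_eq_mul, ← sum_const]
    refine sum_le_sum fun p hp => ?_
    refine (nullity_sum_ge (r := r) hd1 ((mem_primitiveRoots hd1).mp hp) (hcr p) hω).trans ?_
    refine sum_le_sum fun k _ => ?_
    simp only [f]
    rw [count_roots, le_rootMultiplicity_iff h0, hP]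
    have := pow_nullity_dvd_det (1 + Qm (X : ℂ[X]) r) (ω ^ k * cr p)
    rw [map_one_add_Qm, coe_evalRingHom, eval_X] at this
    exact this
  have hle : Multiset.card P.roots ≤ r^3 := (card_roots' P).trans hdeg
  have hS : ∑ ζ ∈ S ∪ P.roots.toFinset, P.roots.count ζ = Multiset.card P.roots :=
    Multiset.sum_count_eq_card fun a ha => mem_union_right _ (Multiset.mem_toFinset.mpr ha)
  have hSle : ∑ ζ ∈ S, P.roots.count ζ ≤ Multiset.card P.roots := by
    rw [← hS]; exact sum_le_sum_of_subset subset_union_left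
  refine ⟨le_antisymm hle (hge.trans hSle), fun ζ hζ => ?_⟩
  have hmem : ζ ∈ S := by
    by_contra hn
    have h1 : ∑ x ∈ insert ζ S, P.roots.count x ≤ Multiset.card P.roots := by
      rw [← hS]
      refine sum_le_sum_of_subset (insert_subset ?_ subset_union_left)
      exact mem_union_right _ (Multiset.mem_toFinset.mpr hζ)
    rw [sum_insert hn] at h1
    have := Multiset.count_pos.mpr hζ
    omega
  obtain ⟨⟨d, p, k⟩, ht, rfl⟩ := mem_image.mp hmem
  simp only [I, mem_sigma, mem_product] at ht
  refine ⟨d, ht.1, ?_⟩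
  simp only [f]
  rw [pow_mul, hq3]
  exact ((mem_primitiveRoots (by have := mem_Icc.mp ht.1; omega)).mp ht.2.1).pow_eq_one

end

/-! ### Compound matrices and the Cauchy–Binet formula -/

/-- Strictly decreasing `k`-tuples in `{0, …, r-1}`, the standard labels of `k`-element subsets. -/
abbrev SA (k r : ℕ) := {f : Fin k → Fin r // StrictAnti f}

noncomputable instance (k r : ℕ) : Fintype (SA k r) := Fintype.ofFinite _

/-- The `k`-th compound matrix: its entries are the `k × k` minors of `A`. -/
noncomputable def compound {R : Type*} [CommRing R] {r : ℕ} (k : ℕ) (A : Matrix (Fin r) (Fin r) R) :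
    Matrix (SA k r) (SA k r) R :=
  Matrix.of fun S T => (A.submatrix S.1 T.1).det

lemma SA_eq_of_range {k r : ℕ} (S T : SA k r) (h : Set.range S.1 = Set.range T.1) : S = T := by
  have hs : StrictMono (S.1 ∘ Fin.rev) := S.2.comp Fin.rev_strictAnti
  have ht : StrictMono (T.1 ∘ Fin.rev) := T.2.comp Fin.rev_strictAnti
  have h1 : Set.range (S.1 ∘ Fin.rev) = Set.range (T.1 ∘ Fin.rev) := by
    rw [Fin.rev_surjective.range_comp, Fin.rev_surjective.range_comp, h]
  have h2 := (StrictMono.range_inj hs ht).1 h1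
  apply Subtype.ext
  funext i
  have := congrFun h2 i.rev
  simpa using this

/-- The decreasing enumeration of a `k`-element set. -/
noncomputable def SAof {k r : ℕ} (s : Finset (Fin r)) (h : #s = k) : SA k r :=
  ⟨fun i => s.orderEmbOfFin h i.rev,
    fun _ _ hij => (s.orderEmbOfFin h).strictMono (Fin.rev_strictAnti hij)⟩

lemma range_SAof {k r : ℕ} (s : Finset (Fin r)) (h : #s = k) :
    Set.range (SAof s h).1 = s := by
  have : (SAof s h).1 = (s.orderEmbOfFin h) ∘ Fin.rev := rfl
  rw [this, Fin.rev_surjective.range_comp, range_orderEmbOfFin]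

lemma exists_perm_of_range {k r : ℕ} (T : SA k r) (f : Fin k → Fin r) (hf : Function.Injective f)
    (h : ∀ i, f i ∈ Set.range T.1) : ∃ π : Equiv.Perm (Fin k), ∀ i, f i = T.1 (π i) := by
  choose g hg using h
  have : Function.Injective g := fun i j hij => hf (by rw [← hg i, ← hg j, hij])
  exact ⟨Equiv.ofBijective g (Finite.injective_iff_bijective.1 this), fun i => (hg i).symm⟩

/-- The **Cauchy–Binet** formula: compound matrices are multiplicative. -/
lemma compound_mul {R : Type*} [CommRing R] {r : ℕ} (k : ℕ) (A B : Matrix (Fin r) (Fin r) R) :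
    compound k (A * B) = compound k A * compound k B := by
  ext S T
  rw [Matrix.mul_apply]
  simp only [compound, Matrix.of_apply]
  have h1 : ((A * B).submatrix S.1 T.1).det =
      ∑ f : Fin k → Fin r, (∏ i, A (S.1 i) (f i)) * (B.submatrix f T.1).det := by
    have : (A * B).submatrix S.1 T.1 =
        fun i => ∑ x, A (S.1 i) x • (fun j => B x (T.1 j)) := by
      funext i j
      simp [Matrix.mul_apply, Finset.sum_apply]
    rw [this]
    change (Matrix.detRowAlternating : (Fin k → R) [⋀^Fin k]→ₗ[R] R).toMultilinearMap _ = _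
    rw [MultilinearMap.map_sum]
    refine sum_congr rfl fun f _ => ?_
    rw [MultilinearMap.map_smul_univ]
    rfl
  rw [h1]
  have h2 : ∀ U : SA k r, (A.submatrix S.1 U.1).det * (B.submatrix U.1 T.1).det =
      ∑ π : Equiv.Perm (Fin k), (∏ i, A (S.1 i) (U.1 (π i))) * (B.submatrix (U.1 ∘ π) T.1).det := by
    intro U
    rw [← Matrix.det_transpose, Matrix.det_apply', sum_mul]
    refine sum_congr rfl fun π _ => ?_
    have : B.submatrix (U.1 ∘ π) T.1 = (B.submatrix U.1 T.1).submatrix π id := rfl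
    rw [this, Matrix.det_permute]
    simp only [Matrix.transpose_apply, Matrix.submatrix_apply]
    ring
  simp only [h2]
  rw [← Fintype.sum_prod_type' (f := fun (U : SA k r) (π : Equiv.Perm (Fin k)) =>
    (∏ i, A (S.1 i) (U.1 (π i))) * (B.submatrix (U.1 ∘ π) T.1).det)]
  symm
  refine sum_bij_ne_zero (fun x _ _ => x.1.1 ∘ x.2) (fun _ _ _ => mem_univ _) ?_ ?_ ?_
  · rintro ⟨U, π⟩ _ _ ⟨U', π'⟩ _ _ h
    simp only at h
    have hr : U = U' := by
      apply SA_eq_of_range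
      rw [← π.surjective.range_comp, h, π'.surjective.range_comp]
    subst hr
    congr 1
    ext i : 1
    exact U.2.injective (congrFun h i)
  · intro f _ hf
    have hinj : Function.Injective f := by
      intro i j hij
      by_contra hne
      apply hf
      rw [Matrix.det_zero_of_row_eq hne, mul_zero]
      funext l
      simp [hij]
    have hcard : #(univ.image f) = k := by rw [card_image_of_injective _ hinj]; simp
    obtain ⟨π, hπ⟩ := exists_perm_of_range (SAof (univ.image f) hcard) f hinj (by
      intro i; rw [range_SAof]; simp)
    have he : (SAof (univ.image f) hcard).1 ∘ π = f := funext fun i => (hπ i).symm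
    refine ⟨(SAof (univ.image f) hcard, π), mem_univ _, ?_, he⟩
    simp only [he, ← hπ]
    exact hf
  · rintro ⟨U, π⟩ _ _
    rfl

lemma compound_one {R : Type*} [CommRing R] {r : ℕ} (k : ℕ) :
    compound k (1 : Matrix (Fin r) (Fin r) R) = 1 := by
  ext S T
  simp only [compound, Matrix.of_apply]
  by_cases h : S = T
  · subst h
    rw [Matrix.submatrix_one _ S.2.injective]; simp
  · rw [Matrix.one_apply_ne h]
    have : ∃ i, ∀ j, S.1 i ≠ T.1 j := by
      by_contra hc
      push Not at hc
      apply h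
      apply SA_eq_of_range
      obtain ⟨π, hπ⟩ := exists_perm_of_range T S.1 S.2.injective (fun i => by
        obtain ⟨j, hj⟩ := hc i; exact ⟨j, hj.symm⟩)
      rw [← π.surjective.range_comp T.1]
      congr 1
      funext i; exact hπ i
    obtain ⟨i, hi⟩ := this
    apply Matrix.det_eq_zero_of_row_eq_zero i
    intro j
    simp [Matrix.one_apply_ne (hi j)]

lemma compound_transpose {R : Type*} [CommRing R] {r : ℕ} (k : ℕ) (A : Matrix (Fin r) (Fin r) R) :
    compound k A.transpose = (compound k A).transpose := by
  ext S T
  simp only [compound, Matrix.of_apply, Matrix.transpose_apply]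
  rw [← Matrix.det_transpose]; rfl

lemma compound_diagonal {R : Type*} [CommRing R] {r : ℕ} (k : ℕ) (d : Fin r → R) :
    compound k (Matrix.diagonal d) = Matrix.diagonal fun T : SA k r => ∏ i, d (T.1 i) := by
  ext S T
  have h : (Matrix.diagonal d).submatrix S.1 T.1 = Matrix.of fun i j =>
      d (S.1 i) * ((1 : Matrix (Fin r) (Fin r) R).submatrix S.1 T.1) i j := by
    ext i j
    simp [Matrix.diagonal_apply, Matrix.one_apply]
  have h1 := congrFun (congrFun (compound_one (R := R) (r := r) k) S) T
  simp only [compound, Matrix.of_apply] at h1 ⊢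
  rw [h, Matrix.det_mul_column, h1, Matrix.one_apply, Matrix.diagonal_apply]
  split_ifs <;> simp

/-- `det (1 + q M)` is the generating function of the sums of principal minors. -/
lemma det_one_add_smul_eq {R : Type*} [CommRing R] {r : ℕ} (q : R) (M : Matrix (Fin r) (Fin r) R) :
    (1 + q • M).det = ∑ k ∈ range (r + 1), q ^ k * (compound k M).trace := by
  have key : ∀ k, (compound k M).trace = ∑ s ∈ univ.powersetCard k,
      (M.submatrix (Subtype.val : s → Fin r) (Subtype.val : s → Fin r)).det := by
    intro k
    rw [Matrix.trace]
    refine sum_bij (fun T _ => univ.image T.1) ?_ ?_ ?_ ?_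
    · intro T _
      rw [mem_powersetCard]
      exact ⟨subset_univ _, by rw [card_image_of_injective _ T.2.injective]; simp⟩
    · intro S _ T _ h
      apply SA_eq_of_range
      have := congrArg (fun s : Finset (Fin r) => (s : Set (Fin r))) h
      simpa using this
    · intro s hs
      refine ⟨SAof s (mem_powersetCard.1 hs).2, mem_univ _, ?_⟩
      apply Finset.coe_injective
      rw [coe_image, coe_univ, Set.image_univ, range_SAof]
    · intro T _
      let e : Fin k ≃ ((univ.image T.1 : Finset (Fin r)) : Type) :=
        Equiv.ofBijective (fun i => ⟨T.1 i, by simp⟩) ⟨fun i j h => T.2.injective (by simpa using h),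
          fun ⟨x, hx⟩ => by
            obtain ⟨i, _, hi⟩ := mem_image.1 hx
            exact ⟨i, Subtype.ext hi⟩⟩
      rw [← Matrix.det_submatrix_equiv_self e]
      rfl
  set P : Polynomial R := (1 + (Polynomial.X : Polynomial R) • M.map Polynomial.C).det with hP
  have hev : (1 + q • M).det = P.eval q := by
    rw [hP, ← Polynomial.coe_evalRingHom, RingHom.map_det]
    congr 1
    ext i j
    simp [Matrix.one_apply, apply_ite (Polynomial.eval q)]
    ring
  have hdeg : P.natDegree < r + 1 := by
    rw [Nat.lt_succ_iff, Polynomial.natDegree_le_iff_coeff_eq_zero]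
    intro k hk
    rw [hP, Matrix.coeff_det_one_add_X_smul_eq_sum_minors, powersetCard_eq_empty.2 (by simpa using hk),
      sum_empty]
  rw [hev, Polynomial.eval_eq_sum_range' hdeg]
  refine sum_congr rfl fun k _ => ?_
  rw [key, hP, Matrix.coeff_det_one_add_X_smul_eq_sum_minors, mul_comm]

/-! ### Transfer matrices of nonintersecting particles -/

/-- One-particle transfer matrix of step `a`: a particle at `t < a` stays, a particle at `t ≥ a`
jumps to any `t'` with `a ≤ t' ≤ t`. -/
def Nm (R : Type*) [CommRing R] (r a : ℕ) : Matrix (Fin r) (Fin r) R :=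
  Matrix.of fun t t' => if t = t' ∨ (a ≤ (t' : ℕ) ∧ t' ≤ t) then 1 else 0

/-- Admissible steps of `k` nonintersecting particles. -/
def Step {k r : ℕ} (a : ℕ) (S T : Fin k → Fin r) : Prop :=
  (∀ j, T j ≤ S j) ∧ (∀ i j, i < j → S j < T i) ∧ ∀ j, (T j : ℕ) < a → S j = T j

/-- The set of positions that can jump to `T j` without meeting `T i`, `i < j`. -/
def InJ {k r : ℕ} (a : ℕ) (T : Fin k → Fin r) (t : Fin r) (j : Fin k) : Prop :=
  ((T j : ℕ) < a ∧ t = T j) ∨ (a ≤ (T j : ℕ) ∧ T j ≤ t ∧ ∀ i < j, t < T i)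

lemma InJ_lt {k r a : ℕ} {T : Fin k → Fin r} (hT : StrictAnti T) {t t' : Fin r} {i j : Fin k}
    (hij : i < j) (h : InJ a T t i) (h' : InJ a T t' j) : t' < t := by
  have h1 : T j < T i := hT hij
  have h2 : T i ≤ t := by
    rcases h with ⟨_, h⟩ | ⟨_, h, _⟩
    · exact h.ge
    · exact h
  have h3 : t' < T i := by
    rcases h' with ⟨_, h⟩ | ⟨_, _, h⟩
    · rw [h]; exact h1
    · exact h i hij
  exact h3.trans_le h2

lemma step_iff {k r a : ℕ} {S T : Fin k → Fin r} (hT : StrictAnti T) :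
    Step a S T ↔ ∀ i, InJ a T (S i) i := by
  constructor
  · rintro ⟨h1, h2, h3⟩ i
    by_cases h : (T i : ℕ) < a
    · exact Or.inl ⟨h, h3 i h⟩
    · exact Or.inr ⟨not_lt.1 h, h1 i, fun i' hi' => h2 i' i hi'⟩
  · intro h
    refine ⟨fun j => ?_, fun i j hij => ?_, fun j hj => ?_⟩
    · rcases h j with ⟨_, h⟩ | ⟨_, h, _⟩
      · exact h.ge
      · exact h
    · rcases h j with ⟨_, h⟩ | ⟨_, _, h⟩
      · rw [h]; exact hT hij
      · exact h i hij
    · rcases h j with ⟨_, h⟩ | ⟨h, _, _⟩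
      · exact h
      · omega

open Classical in
/-- The minors of the transfer matrix are the indicators of admissible steps. -/
lemma compound_Nm (R : Type*) [CommRing R] {k r : ℕ} (a : ℕ) (S T : SA k r) :
    compound k (Nm R r a) S T = if Step a S.1 T.1 then 1 else 0 := by
  obtain ⟨S, hS⟩ := S
  obtain ⟨T, hT⟩ := T
  simp only [compound, Matrix.of_apply]
  -- subtracting from each column its predecessor whenever the target is at least `a`
  have hdet : ((Nm R r a).submatrix S T).det =
      (Matrix.of fun i j => if InJ a T (S i) j then (1:R) else 0).det := by
    cases k with
    | zero => simp
    | succ k =>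
      refine Matrix.det_eq_of_forall_col_eq_smul_add_pred
        (fun j => if a ≤ (T j.succ : ℕ) then 1 else 0) ?_ ?_
      · intro i
        simp only [Nm, Matrix.submatrix_apply, Matrix.of_apply]
        congr 1
        apply propext
        simp only [InJ, Fin.not_lt_zero, false_implies, implies_true, and_true]
        constructor
        · rintro (h | h)
          · rcases lt_or_ge (T 0 : ℕ) a with h' | h'
            · exact Or.inl ⟨h', h⟩
            · exact Or.inr ⟨h', h.ge⟩
          · exact Or.inr h
        · rintro (h | h)
          · exact Or.inl h.2
          · exact Or.inr h
      · intro i j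
        have h0 : T j.succ < T j.castSucc := hT (Fin.castSucc_lt_succ)
        have hlt : (∀ i' < j.succ, S i < T i') ↔ S i < T j.castSucc := by
          constructor
          · intro h; exact h _ Fin.castSucc_lt_succ
          · intro h i' hi'
            exact h.trans_le (hT.antitone (Fin.le_castSucc_iff.2 hi'))
        simp only [Nm, Matrix.submatrix_apply, Matrix.of_apply, InJ, hlt]
        rw [Fin.lt_def] at h0
        simp only [Fin.ext_iff, Fin.lt_def, Fin.le_def]
        by_cases c1 : a ≤ (T j.succ : ℕ)
        · have c2 : a ≤ (T j.castSucc : ℕ) := by omega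
          by_cases c3 : (T j.castSucc : ℕ) ≤ S i
          · have e1 : ((S i : ℕ) = T j.succ ∨ a ≤ (T j.succ : ℕ) ∧ (T j.succ : ℕ) ≤ S i) := by omega
            have e2 : ((S i : ℕ) = T j.castSucc ∨ a ≤ (T j.castSucc : ℕ) ∧ (T j.castSucc : ℕ) ≤ S i) := by omega
            have e3 : ¬ ((T j.succ : ℕ) < a ∧ (S i : ℕ) = T j.succ ∨ a ≤ (T j.succ : ℕ) ∧
              (T j.succ : ℕ) ≤ S i ∧ (S i : ℕ) < T j.castSucc) := by omega
            rw [if_pos e1, if_pos e2, if_neg e3, if_pos c1]; ring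
          · have e2 : ¬ ((S i : ℕ) = T j.castSucc ∨ a ≤ (T j.castSucc : ℕ) ∧ (T j.castSucc : ℕ) ≤ S i) := by omega
            rw [if_neg e2, mul_zero, add_zero]
            congr 1
            apply propext
            omega
        · rw [if_neg c1, zero_mul, add_zero]
          congr 1
          apply propext
          omega
  rw [hdet]
  split_ifs with h
  · rw [step_iff hT] at h
    have : (Matrix.of fun i j => if InJ a T (S i) j then (1:R) else 0) = 1 := by
      ext i j
      rw [Matrix.of_apply, Matrix.one_apply]
      congr 1
      apply propext
      refine ⟨fun hij => ?_, fun hij => hij ▸ h i⟩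
      rcases lt_trichotomy i j with hl | hl | hl
      · exact absurd (InJ_lt hT hl (h i) hij) (lt_irrefl _)
      · exact hl
      · exact absurd (InJ_lt hT hl hij (h i)) (lt_irrefl _)
    rw [this, Matrix.det_one]
  · by_contra hne
    -- every column is nonzero, so the columns are matched to the rows monotonically
    have hex : ∀ j, ∃ i, InJ a T (S i) j := by
      intro j
      by_contra hc
      push Not at hc
      exact hne (Matrix.det_eq_zero_of_column_eq_zero j fun i => by
        rw [Matrix.of_apply, if_neg (hc i)])
    choose g hg using hex
    have hmono : StrictMono g := fun i j hij => by
      have := InJ_lt hT hij (hg i) (hg j)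
      exact hS.lt_iff_gt.1 this
    have hid : g = id := (StrictMono.range_inj hmono strictMono_id).1 (by
      rw [(Finite.surjective_of_injective hmono.injective).range_eq, Set.range_id])
    apply h
    rw [step_iff hT]
    intro i
    have := hg i
    rwa [hid] at this

/-- Ordered product `M a * M (a+1) * ⋯ * M (a+n-1)`. -/
def ordProd {σ R : Type*} [Fintype σ] [DecidableEq σ] [CommRing R] (M : ℕ → Matrix σ σ R) :
    ℕ → ℕ → Matrix σ σ R
  | _, 0 => 1
  | a, n + 1 => M a * ordProd M (a + 1) n

lemma compound_ordProd {R : Type*} [CommRing R] {r : ℕ} (k : ℕ) (M : ℕ → Matrix (Fin r) (Fin r) R)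
    (a n : ℕ) : compound k (ordProd M a n) = ordProd (fun a => compound k (M a)) a n := by
  induction n generalizing a with
  | zero => simp [ordProd, compound_one]
  | succ n ih => simp [ordProd, compound_mul, ih]

/-- Entries of ordered products are sums over paths. -/
lemma ordProd_apply {σ R : Type*} [Fintype σ] [DecidableEq σ] [CommRing R] (M : ℕ → Matrix σ σ R)
    (a n : ℕ) (s t : σ) : ordProd M a n s t =
      ∑ F : Fin (n + 1) → σ, if F 0 = s ∧ F (Fin.last n) = t then
        ∏ i : Fin n, M (a + i) (F i.castSucc) (F i.succ) else 0 := by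
  induction n generalizing a s with
  | zero =>
    rw [ordProd, Matrix.one_apply, ← (Equiv.funUnique (Fin 1) σ).symm.sum_comp]
    simp only [univ_eq_empty, prod_empty]
    rw [Finset.sum_eq_single s]
    · simp [Equiv.funUnique]
    · intro b _ hb
      simp [Equiv.funUnique, hb]
    · simp
  | succ n ih =>
    rw [ordProd, Matrix.mul_apply, ← (Fin.consEquiv (fun _ : Fin (n + 2) => σ)).sum_comp,
      Fintype.sum_prod_type]
    have hs : ∀ b ∈ univ, b ≠ s → ∑ F : Fin (n + 1) → σ,
        (if (Fin.consEquiv (fun _ : Fin (n + 2) => σ)) (b, F) 0 = s ∧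
          (Fin.consEquiv (fun _ : Fin (n + 2) => σ)) (b, F) (Fin.last (n + 1)) = t then
        ∏ i : Fin (n + 1), M (a + i) ((Fin.consEquiv (fun _ : Fin (n + 2) => σ)) (b, F) i.castSucc)
          ((Fin.consEquiv (fun _ : Fin (n + 2) => σ)) (b, F) i.succ) else 0) = 0 :=
      fun b _ hb => sum_eq_zero fun F _ => if_neg fun h => hb h.1
    rw [Finset.sum_eq_single_of_mem (f := fun b => ∑ F : Fin (n + 1) → σ, _) s (mem_univ _) hs]
    simp only [ih, mul_sum]
    rw [sum_comm]
    refine sum_congr rfl fun F _ => ?_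
    rw [Finset.sum_eq_single (F 0)]
    · simp only [Fin.consEquiv_apply, Fin.cons_zero, true_and]
      have h1 : (Fin.cons s F : Fin (n + 2) → σ) (Fin.last (n + 1)) = F (Fin.last n) := by
        rw [← Fin.succ_last, Fin.cons_succ]
      rw [h1]
      split_ifs with h
      · rw [Fin.prod_univ_succ]
        congr 1
        refine prod_congr rfl fun i _ => ?_
        rw [← Fin.succ_castSucc, Fin.cons_succ, Fin.cons_succ, Fin.val_succ]
        congr 1
        ring
      · rw [mul_zero]
    · intro b _ hb
      rw [if_neg (fun h => hb h.1.symm), mul_zero]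
    · simp

/-- Weight of a position after step `a`. -/
def stepWt {R : Type*} [CommRing R] (p y : R) (a s : ℕ) : R :=
  if s ≤ a then 1 else y * p ^ (s - (a + 1))

/-- Weighted one-particle transfer matrix. -/
def Em {R : Type*} [CommRing R] (p y : R) (r a : ℕ) : Matrix (Fin r) (Fin r) R :=
  Nm R r a * Matrix.diagonal fun t : Fin r => stepWt p y a t

lemma uq_eq_sum {R : Type*} [CommRing R] (p : R) (n k : ℕ) :
    uq p n (k + 1) = ∑ s ∈ range n, p ^ s * uq p s k := by
  induction n with
  | zero => simp [uq_eq_zero p 0 (k+1) (by omega)]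
  | succ n ih => rw [uq_succ, ih, sum_range_succ]

lemma sum_fin_shift {R : Type*} [AddCommMonoid R] (r a t : ℕ) (ht : t < r) (φ : ℕ → R) :
    ∑ s : Fin r, (if a < (s:ℕ) ∧ (s:ℕ) ≤ t then φ (s - (a + 1)) else 0) = ∑ s ∈ range (t - a), φ s := by
  rw [Fin.sum_univ_eq_sum_range (fun s => if a < s ∧ s ≤ t then φ (s - (a + 1)) else 0) r,
    ← sum_filter]
  symm
  refine sum_nbij' (fun s => s + (a + 1)) (fun s => s - (a + 1)) ?_ ?_ ?_ ?_ ?_ <;>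
  · intro s hs
    simp only [mem_filter, mem_range] at hs ⊢
    first | omega | (congr 1; omega)

/-- Closed form of the tail products of the weighted transfer matrices. -/
lemma ordProd_Em {R : Type*} [CommRing R] (p y : R) (r a n : ℕ) (h : a + n = r) (t k : Fin r) :
    ordProd (Em p y r) a n t k = if (t : ℕ) < a ∨ (k : ℕ) < a then (if t = k then 1 else 0) else
      y ^ ((k : ℕ) - a) * uq p (t - a) (k - a) := by
  induction n generalizing a t with
  | zero =>
    rw [ordProd, Matrix.one_apply, if_pos (Or.inl (by omega))]
  | succ n ih =>
    rw [ordProd, Matrix.mul_apply]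
    simp only [ih (a + 1) (by omega), Em, Matrix.mul_diagonal, Nm, Matrix.of_apply]
    by_cases h1 : (t : ℕ) < a
    · rw [if_pos (Or.inl h1), Finset.sum_eq_single t]
      · simp [stepWt, h1.le, show (t:ℕ) < a + 1 by omega]
      · intro s _ hs
        rw [if_neg, zero_mul, zero_mul]
        rintro (h | h)
        · exact hs h.symm
        · have := h.2; rw [Fin.le_def] at this; omega
      · simp
    · by_cases h2 : (k : ℕ) ≤ a
      · rw [Finset.sum_eq_single k]
        · have c1 : (k : ℕ) < a + 1 ∨ (k : ℕ) < a + 1 := by omega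
          rw [if_pos c1, if_pos rfl, mul_one, stepWt, if_pos h2, mul_one]
          by_cases h3 : (k : ℕ) = a
          · rw [if_pos (Or.inr ⟨h3.ge, Fin.le_def.2 (by omega)⟩), if_neg (by omega), h3]
            simp [uq_zero_right]
          · rw [if_neg, if_pos (Or.inr (by omega)), if_neg]
            · rintro rfl; omega
            · rintro (rfl | h) <;> omega
        · intro s _ hs
          have c1 : (s : ℕ) < a + 1 ∨ (k : ℕ) < a + 1 := by omega
          rw [if_pos c1, if_neg hs, mul_zero]
        · simp
      · have hk : (k : ℕ) - a = (k - (a + 1)) + 1 := by omega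
        rw [if_neg (by omega), hk, uq_eq_sum, mul_sum, ← sum_fin_shift r a t t.2]
        refine sum_congr rfl fun s _ => ?_
        by_cases h3 : a < (s : ℕ) ∧ (s : ℕ) ≤ t
        · rw [if_pos h3, if_pos (Or.inr ⟨h3.1.le, h3.2⟩), if_neg (by omega), stepWt, if_neg (by omega),
            pow_succ]
          ring
        · rw [if_neg h3]
          by_cases h4 : (s : ℕ) ≤ a
          · have c1 : (s : ℕ) < a + 1 ∨ (k : ℕ) < a + 1 := by omega
            have c2 : s ≠ k := by rintro rfl; omega
            rw [if_pos c1, if_neg c2, mul_zero]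
          · rw [if_neg, zero_mul, zero_mul]
            rintro (rfl | h)
            · omega
            · exact h3 ⟨by omega, h.2⟩

/-- The half products assemble to the matrix `Qm`. -/
lemma Qm_eq {R : Type*} [CommRing R] (q : R) (r : ℕ) :
    Qm q r = q • ((Matrix.diagonal fun t : Fin r => (q ^ 3) ^ (t : ℕ)) * ordProd (Em (q ^ 3) 1 r) 0 r *
      (ordProd (Em (q ^ 3) (q ^ 3) r) 0 r).transpose) := by
  ext i j
  rw [Matrix.smul_apply, Matrix.mul_apply, Qm, Matrix.of_apply, gb_eq _ _ _ r i.2, smul_eq_mul,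
    mul_assoc, mul_sum, ← Fin.sum_univ_eq_sum_range]
  congr 1
  refine sum_congr rfl fun k _ => ?_
  rw [Matrix.diagonal_mul, Matrix.transpose_apply, ordProd_Em _ _ _ _ _ (by omega),
    ordProd_Em _ _ _ _ _ (by omega)]
  simp
  ring

/-! ### The determinant as a sum over pairs of path families -/

/-- Pairs of families of `k` nonintersecting paths with common end points. -/
def Good {k r : ℕ} (x : (Fin (r + 1) → SA k r) × (Fin (r + 1) → SA k r)) : Prop :=
  x.1 0 = x.2 0 ∧ x.1 (Fin.last r) = x.2 (Fin.last r) ∧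
  (∀ a : Fin r, Step a (x.1 a.castSucc).1 (x.1 a.succ).1) ∧
  ∀ a : Fin r, Step a (x.2 a.castSucc).1 (x.2 a.succ).1

/-- The statistic of a pair of path families that becomes a third of the off-diagonal volume. -/
def wt {k r : ℕ} (x : (Fin (r + 1) → SA k r) × (Fin (r + 1) → SA k r)) : ℕ :=
  ∑ i, ((x.1 0).1 i : ℕ) + ∑ a : Fin r, ∑ i, (((x.1 a.succ).1 i : ℕ) - (a + 1)) +
    ∑ a : Fin r, ∑ i, (((x.2 a.succ).1 i : ℕ) - a)

lemma stepWt_one {R : Type*} [CommRing R] (p : R) (a s : ℕ) : stepWt p 1 a s = p ^ (s - (a + 1)) := by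
  rw [stepWt]
  split_ifs with h
  · rw [show s - (a + 1) = 0 by omega, pow_zero]
  · rw [one_mul]

lemma stepWt_self {R : Type*} [CommRing R] (p : R) (a s : ℕ) : stepWt p p a s = p ^ (s - a) := by
  rw [stepWt]
  split_ifs with h
  · rw [show s - a = 0 by omega, pow_zero]
  · rw [← pow_succ']; congr 1; omega

open Classical in
lemma compound_Em {R : Type*} [CommRing R] (p y : R) {k r : ℕ} (a : ℕ) (S T : SA k r) :
    compound k (Em p y r a) S T = if Step a S.1 T.1 then ∏ i, stepWt p y a (T.1 i) else 0 := by
  rw [Em, compound_mul, compound_diagonal, Matrix.mul_diagonal, compound_Nm]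
  split_ifs <;> simp

lemma prod_ite_zero' {ι R : Type*} [Fintype ι] [CommRing R] (P : ι → Prop) [DecidablePred P]
    [Decidable (∀ i, P i)] (f : ι → R) :
    ∏ i, (if P i then f i else 0) = if ∀ i, P i then ∏ i, f i else 0 := by
  split_ifs with h
  · exact prod_congr rfl fun i _ => if_pos (h i)
  · push Not at h
    obtain ⟨i, hi⟩ := h
    exact prod_eq_zero (mem_univ i) (if_neg hi)

open Classical in
/-- Expansion of the determinant over pairs of nonintersecting path families. -/
lemma det_eq_sum_paths {R : Type*} [CommRing R] (q : R) (r : ℕ) :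
    (1 + Qm q r).det = ∑ k ∈ range (r + 1),
      ∑ x : (Fin (r + 1) → SA k r) × (Fin (r + 1) → SA k r) with Good x, q ^ (k + 3 * wt x) := by
  rw [Qm_eq, det_one_add_smul_eq]
  refine sum_congr rfl fun k _ => ?_
  simp only [compound_mul, compound_transpose, compound_ordProd, compound_diagonal]
  rw [Matrix.trace]
  simp only [Matrix.diag_apply, Matrix.mul_apply (M := _ * _), Matrix.diagonal_mul,
    Matrix.transpose_apply]
  have h1 : ∀ (S T : SA k r) (y : R), ordProd (fun a => compound k (Em (q ^ 3) y r a)) 0 r S T =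
      ∑ F : Fin (r + 1) → SA k r, if F 0 = S ∧ F (Fin.last r) = T then
        (if ∀ a : Fin r, Step a (F a.castSucc).1 (F a.succ).1 then
          ∏ a : Fin r, ∏ i, stepWt (q ^ 3) y a ((F a.succ).1 i) else 0) else 0 := by
    intro S T y
    rw [ordProd_apply]
    refine sum_congr rfl fun F _ => ?_
    simp only [compound_Em, zero_add]
    rw [prod_ite_zero']
  simp only [h1]
  have h2 : ∀ S T : SA k r, ((∏ i, (q ^ 3) ^ ((S.1 i : Fin r) : ℕ)) *
      ∑ F : Fin (r + 1) → SA k r, if F 0 = S ∧ F (Fin.last r) = T then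
        (if ∀ a : Fin r, Step a (F a.castSucc).1 (F a.succ).1 then
          ∏ a : Fin r, ∏ i, stepWt (q ^ 3) 1 a ((F a.succ).1 i) else 0) else 0) *
      (∑ F : Fin (r + 1) → SA k r, if F 0 = S ∧ F (Fin.last r) = T then
        (if ∀ a : Fin r, Step a (F a.castSucc).1 (F a.succ).1 then
          ∏ a : Fin r, ∏ i, stepWt (q ^ 3) (q ^ 3) a ((F a.succ).1 i) else 0) else 0) =
      ∑ x : (Fin (r + 1) → SA k r) × (Fin (r + 1) → SA k r),
        if x.1 (Fin.last r) = T then (if x.1 0 = S then (if Good x then q ^ (3 * wt x) else 0) else 0)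
          else 0 := by
    intro S T
    rw [mul_assoc, sum_mul_sum, mul_sum, Fintype.sum_prod_type]
    refine sum_congr rfl fun F _ => ?_
    rw [mul_sum]
    refine sum_congr rfl fun G _ => ?_
    by_cases hS : F 0 = S
    · by_cases hT : F (Fin.last r) = T
      · by_cases hG : Good (F, G)
        · obtain ⟨g1, g2, g3, g4⟩ := hG
          simp only at g1 g2 g3 g4
          rw [if_pos ⟨hS, hT⟩, if_pos g3, if_pos ⟨g1 ▸ hS, g2 ▸ hT⟩, if_pos g4, if_pos hT, if_pos hS,
            if_pos ⟨g1, g2, g3, g4⟩]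
          simp only [stepWt_one, stepWt_self, prod_pow_eq_pow_sum]
          rw [← pow_add, ← pow_add, ← hS, pow_mul, wt, add_assoc]
        · rw [if_pos ⟨hS, hT⟩, if_pos hT, if_pos hS, if_neg hG]
          by_cases g3 : ∀ a : Fin r, Step a (F a.castSucc).1 (F a.succ).1
          · by_cases g4 : ∀ a : Fin r, Step a (G a.castSucc).1 (G a.succ).1
            · rw [if_neg (fun h : G 0 = S ∧ G (Fin.last r) = T =>
                hG ⟨hS.trans h.1.symm, hT.trans h.2.symm, g3, g4⟩)]
              simp
            · rw [if_neg g4]; simp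
          · rw [if_neg g3]; simp
      · rw [if_neg (fun h => hT h.2), if_neg hT]; simp
    · rw [if_neg (fun h => hS h.1), if_neg hS]; simp
  simp only [h2]
  rw [sum_filter]
  simp only [sum_comm (s := (univ : Finset (SA k r)))
    (t := (univ : Finset ((Fin (r + 1) → SA k r) × (Fin (r + 1) → SA k r))))]
  rw [mul_sum]
  refine sum_congr rfl fun x _ => ?_
  simp only [sum_ite_eq, mem_univ, if_true]
  split_ifs
  · rw [pow_add]
  · simp

/-! ### Cube sets and path families -/

/-- Sets of cubes (0-based coordinates) of cyclically symmetric plane partitions in an `r`-box. -/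
structure IsCS (r : ℕ) (C : ℕ → ℕ → ℕ → Prop) : Prop where
  bd : ∀ {i j l}, C i j l → i < r ∧ j < r ∧ l < r
  mono : ∀ {i j l i' j' l'}, C i j l → i' ≤ i → j' ≤ j → l' ≤ l → C i' j' l'
  cyc : ∀ {i j l}, C i j l → C l i j

/-- A family of `k` nonintersecting paths, as numerical functions: `f a x` is the position of
path `x` at time `a`. -/
structure IsPath (k r : ℕ) (f : ℕ → ℕ → ℕ) : Prop where
  bd : ∀ {a x}, x < k → f a x < r
  mono : ∀ {a x}, x < k → f (a + 1) x ≤ f a x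
  halt : ∀ {a x}, x < k → f (a + 1) x < a → f a x = f (a + 1) x
  inter : ∀ {a x}, x + 1 < k → f a (x + 1) < f (a + 1) x

/-- Two path families with the same end points. -/
structure IsPair (k r : ℕ) (f g : ℕ → ℕ → ℕ) : Prop where
  left : IsPath k r f
  right : IsPath k r g
  start : ∀ {x}, x < k → f 0 x = g 0 x
  final : ∀ {x}, x < k → f r x = g r x

/-- The shell of cubes `(x, x + u, x + v)` encoded by a pair of path families. -/
def shell (k : ℕ) (f g : ℕ → ℕ → ℕ) (x u v : ℕ) : Prop :=
  x < k ∧ (u ≤ v → v ≤ f u x) ∧ (v ≤ u → u ≤ g v x)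

/-- The cube set generated by the shells under cyclic rotation. -/
def cubes (k : ℕ) (f g : ℕ → ℕ → ℕ) (i j l : ℕ) : Prop :=
  (i ≤ j ∧ i ≤ l ∧ shell k f g i (j - i) (l - i)) ∨
  (j ≤ l ∧ j ≤ i ∧ shell k f g j (l - j) (i - j)) ∨
  (l ≤ i ∧ l ≤ j ∧ shell k f g l (i - l) (j - l))

section paths
variable {k r : ℕ} {f g : ℕ → ℕ → ℕ}

lemma IsPath.anti (h : IsPath k r f) {x : ℕ} (hx : x < k) {a b : ℕ} (hab : a ≤ b) :
    f b x ≤ f a x := by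
  induction b, hab using Nat.le_induction with
  | base => exact le_rfl
  | succ b _ ih => exact (h.mono hx).trans ih

lemma IsPath.le_iff (h : IsPath k r f) {x : ℕ} (hx : x < k) (a v : ℕ) :
    v ≤ f a x ↔ v ≤ f (min a v) x := by
  constructor
  · intro hv; exact hv.trans (h.anti hx (min_le_left _ _))
  · intro hv
    rcases le_total a v with hav | hav
    · rwa [min_eq_left hav] at hv
    · rw [min_eq_right hav] at hv
      induction a, hav using Nat.le_induction with
      | base => exact hv
      | succ b hb ih =>
        by_contra hc
        have := h.halt (a := b) hx (by omega)
        omega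

lemma IsPath.add_lt (h : IsPath k r f) {x : ℕ} (hx : x < k) (a : ℕ) : f a x + x < r := by
  induction x generalizing a with
  | zero => exact h.bd hx
  | succ x ih =>
    have h1 := h.inter (a := a) hx
    have h2 := ih (by omega) (a + 1)
    omega

lemma IsPair.swap (h : IsPair k r f g) : IsPair k r g f :=
  ⟨h.right, h.left, fun hx => (h.start hx).symm, fun hx => (h.final hx).symm⟩

lemma shell_swap {x u v : ℕ} : shell k f g x u v ↔ shell k g f x v u := by
  simp only [shell]; tauto

lemma IsPair.diag (h : IsPair k r f g) {x : ℕ} (hx : x < k) {u : ℕ} (hu : u ≤ f u x) :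
    u ≤ g u x := by
  have hr : u < r := hu.trans_lt (h.left.bd hx)
  have h1 := (h.left.le_iff hx r u).2 (by rwa [min_eq_right hr.le])
  rw [h.final hx] at h1
  have h2 := (h.right.le_iff hx r u).1 h1
  rwa [min_eq_right hr.le] at h2

lemma IsPair.shell_pred (h : IsPair k r f g) {x u v : ℕ} (hs : shell k f g x u (v + 1)) :
    shell k f g x u v := by
  obtain ⟨hx, h1, h2⟩ := hs
  refine ⟨hx, fun huv => by have := h1 (by omega); omega, fun hvu => ?_⟩
  rcases Nat.lt_or_ge v u with hlt | hge
  · exact (h2 hlt).trans (h.right.mono hx)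
  · obtain rfl : u = v := by omega
    exact h.diag hx (by have := h1 (by omega); omega)

lemma IsPair.shell_pred' (h : IsPair k r f g) {x u v : ℕ} (hs : shell k f g x (u + 1) v) :
    shell k f g x u v :=
  shell_swap.1 (h.swap.shell_pred (shell_swap.1 hs))

lemma IsPair.shell_shift (h : IsPair k r f g) {x u v : ℕ} (hs : shell k f g (x + 1) u v) :
    shell k f g x (u + 1) (v + 1) := by
  obtain ⟨hx, h1, h2⟩ := hs
  refine ⟨by omega, fun huv => ?_, fun hvu => ?_⟩
  · exact (h1 (by omega)).trans_lt (h.left.inter hx)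
  · exact (h2 (by omega)).trans_lt (h.right.inter hx)

lemma IsPair.shell_symm (h : IsPair k r f g) {x v : ℕ} (hs : shell k f g x 0 v) :
    shell k f g x v 0 := by
  obtain ⟨hx, h1, h2⟩ := hs
  have h3 := h1 (by omega)
  refine ⟨hx, fun hv => by omega, fun _ => by rwa [← h.start hx]⟩

lemma IsPair.shell_symm' (h : IsPair k r f g) {x v : ℕ} (hs : shell k f g x v 0) :
    shell k f g x 0 v :=
  shell_swap.1 (h.swap.shell_symm (shell_swap.1 hs))

lemma IsPair.shell_bd (h : IsPair k r f g) {x u v : ℕ} (hs : shell k f g x u v) :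
    x + u < r ∧ x + v < r := by
  obtain ⟨hx, h1, h2⟩ := hs
  rcases le_total u v with huv | huv
  · have := h1 huv; have := h.left.add_lt hx u; omega
  · have := h2 huv; have := h.right.add_lt hx v; omega

lemma IsPair.cubes_iff (h : IsPair k r f g) (x u v : ℕ) :
    cubes k f g x (x + u) (x + v) ↔ shell k f g x u v := by
  constructor
  · rintro (⟨_, _, hs⟩ | ⟨_, h1, hs⟩ | ⟨h1, _, hs⟩)
    · simpa using hs
    · obtain rfl : u = 0 := by omega
      simp only [add_zero, Nat.add_sub_cancel_left, Nat.sub_self] at hs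
      exact h.shell_symm' hs
    · obtain rfl : v = 0 := by omega
      simp only [add_zero, Nat.add_sub_cancel_left, Nat.sub_self] at hs
      exact h.shell_symm hs
  · intro hs
    exact Or.inl ⟨by omega, by omega, by simpa using hs⟩

lemma cubes_cyc {i j l : ℕ} (h : cubes k f g i j l) : cubes k f g l i j := by
  simp only [cubes] at h ⊢; tauto

lemma IsPair.cubes_pred (h : IsPair k r f g) {i j l : ℕ} (hc : cubes k f g (i + 1) j l) :
    cubes k f g i j l := by
  have key : i + 1 ≤ j → i + 1 ≤ l → shell k f g (i + 1) (j - (i + 1)) (l - (i + 1)) →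
      cubes k f g i j l := by
    intro h1 h2 hs
    refine Or.inl ⟨by omega, by omega, ?_⟩
    have := h.shell_shift hs
    rwa [show j - (i + 1) + 1 = j - i by omega, show l - (i + 1) + 1 = l - i by omega] at this
  rcases hc with ⟨h1, h2, hs⟩ | ⟨h1, h2, hs⟩ | ⟨h1, h2, hs⟩
  · exact key h1 h2 hs
  · rcases Nat.lt_or_ge i j with hij | hij
    · obtain rfl : j = i + 1 := by omega
      refine key le_rfl h1 ?_
      rw [Nat.sub_self] at hs ⊢
      exact h.shell_symm' hs
    · refine Or.inr (Or.inl ⟨h1, hij, h.shell_pred ?_⟩)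
      rwa [show i - j + 1 = i + 1 - j by omega]
  · rcases Nat.lt_or_ge i l with hij | hij
    · obtain rfl : l = i + 1 := by omega
      refine key h2 le_rfl ?_
      rw [Nat.sub_self] at hs ⊢
      exact h.shell_symm hs
    · refine Or.inr (Or.inr ⟨hij, h2, h.shell_pred' ?_⟩)
      rwa [show i - l + 1 = i + 1 - l by omega]

lemma IsPair.cubes_le (h : IsPair k r f g) {i i' j l : ℕ} (hc : cubes k f g i j l) (hi : i' ≤ i) :
    cubes k f g i' j l := by
  induction i, hi using Nat.le_induction with
  | base => exact hc
  | succ i _ ih => exact ih (h.cubes_pred hc)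

lemma IsPair.isCS (h : IsPair k r f g) : IsCS r (cubes k f g) where
  cyc := cubes_cyc
  bd := by
    rintro i j l (⟨h1, h2, hs⟩ | ⟨h1, h2, hs⟩ | ⟨h1, h2, hs⟩) <;>
    · have := h.shell_bd hs
      omega
  mono := by
    intro i j l i' j' l' hc hi hj hl
    have h1 := cubes_cyc (h.cubes_le hc hi)
    have h2 := cubes_cyc (h.cubes_le h1 hl)
    exact cubes_cyc (h.cubes_le h2 hj)

/-- The paths are determined by the cube set. -/
lemma IsPair.le_left_iff (h : IsPair k r f g) {x : ℕ} (hx : x < k) (a v : ℕ) :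
    v ≤ f a x ↔ cubes k f g x (x + min a v) (x + v) := by
  rw [h.cubes_iff, h.left.le_iff hx]
  constructor
  · intro hv
    refine ⟨hx, fun _ => hv, fun hm => ?_⟩
    have : min a v = v := by omega
    rw [this] at hv ⊢
    exact h.diag hx hv
  · intro hs
    exact hs.2.1 (min_le_right _ _)

lemma cubes_swap {i j l : ℕ} : cubes k f g i j l ↔ cubes k g f i l j := by
  simp only [cubes, shell_swap (f := f) (g := g)]; tauto

lemma IsPair.le_right_iff (h : IsPair k r f g) {x : ℕ} (hx : x < k) (a v : ℕ) :
    v ≤ g a x ↔ cubes k f g x (x + v) (x + min a v) := by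
  rw [h.swap.le_left_iff hx, cubes_swap]

end paths

section inverse
variable {k r : ℕ} {C : ℕ → ℕ → ℕ → Prop}

open Classical in
/-- The path family read off from a cube set. -/
noncomputable def readPath (r : ℕ) (C : ℕ → ℕ → ℕ → Prop) (a x : ℕ) : ℕ :=
  Nat.findGreatest (fun v => C x (x + min a v) (x + v)) r

lemma le_readPath (h : IsCS r C) {x : ℕ} (hx : C x x x) (a v : ℕ) :
    v ≤ readPath r C a x ↔ C x (x + min a v) (x + v) := by
  classical
  constructor
  · intro hv
    have h0 : C x (x + min a (readPath r C a x)) (x + readPath r C a x) :=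
      Nat.findGreatest_spec (P := fun v => C x (x + min a v) (x + v)) (Nat.zero_le r) (by simpa using hx)
    exact h.mono h0 le_rfl (by omega) (by omega)
  · intro hv
    refine Nat.le_findGreatest ?_ hv
    have := h.bd hv
    omega

lemma isPath_readPath (h : IsCS r C) (hk : ∀ x, x < k ↔ C x x x) : IsPath k r (readPath r C) where
  bd := by
    intro a x hx
    have h1 := (le_readPath h ((hk x).1 hx) a _).1 le_rfl
    have := h.bd h1
    omega
  mono := by
    intro a x hx
    rw [le_readPath h ((hk x).1 hx)]
    exact h.mono ((le_readPath h ((hk x).1 hx) (a + 1) _).1 le_rfl) le_rfl (by omega) le_rfl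
  halt := by
    intro a x hx hs
    have hx' := (hk x).1 hx
    apply le_antisymm
    · by_contra hc
      have h1 := (le_readPath h hx' a _).1 le_rfl
      rcases le_total (readPath r C a x) a with h2 | h2
      · apply hc
        rw [le_readPath h hx', min_eq_right (by omega)]
        rwa [min_eq_right h2] at h1
      · have h3 : a ≤ readPath r C (a + 1) x := by
          rw [le_readPath h hx', min_eq_right (by omega)]
          rw [min_eq_left h2] at h1
          exact h.mono h1 le_rfl le_rfl (by omega)
        omega
    · rw [le_readPath h hx']
      exact h.mono ((le_readPath h hx' (a + 1) _).1 le_rfl) le_rfl (by omega) le_rfl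
  inter := by
    intro a x hx
    have hx' := (hk _).1 hx
    have hx0 := (hk x).1 (by omega)
    have h1 := (le_readPath h hx' a _).1 le_rfl
    rw [Nat.lt_iff_add_one_le, le_readPath h hx0]
    exact h.mono h1 (by omega) (by omega) (by omega)

lemma IsCS.swap (h : IsCS r C) : IsCS r (fun i j l => C i l j) where
  bd hc := by have := h.bd hc; omega
  mono hc h1 h2 h3 := h.mono hc h1 h3 h2
  cyc hc := h.cyc (h.cyc hc)

/-- A cyclically symmetric cube set gives a pair of path families: the second family is read off from
the mirror image, and rotation makes the starting points agree. -/
lemma isPair_readPath (h : IsCS r C) (hk : ∀ x, x < k ↔ C x x x) :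
    IsPair k r (readPath r C) (readPath r fun i j l => C i l j) where
  left := isPath_readPath h hk
  right := isPath_readPath h.swap hk
  start := by
    intro x hx
    have hx' := (hk x).1 hx
    refine eq_of_forall_le_iff fun v => ?_
    rw [le_readPath h hx', le_readPath h.swap hx']
    simp only [Nat.zero_min, add_zero]
    exact ⟨fun hc => h.cyc (h.cyc hc), fun hc => h.cyc hc⟩
  final := by
    intro x hx
    have hx' := (hk x).1 hx
    refine eq_of_forall_le_iff fun v => ?_
    rw [le_readPath h hx', le_readPath h.swap hx']
    constructor <;>
    · intro hc
      have := h.bd hc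
      have hm : min r v = v := by omega
      rw [hm] at hc ⊢
      exact hc

lemma shell_readPath (h : IsCS r C) (hk : ∀ x, x < k ↔ C x x x) (x u v : ℕ) :
    shell k (readPath r C) (readPath r fun i j l => C i l j) x u v ↔ C x (x + u) (x + v) := by
  constructor
  · rintro ⟨hx, h1, h2⟩
    have hx' := (hk x).1 hx
    rcases le_total u v with huv | huv
    · have := (le_readPath h hx' u v).1 (h1 huv)
      rwa [min_eq_left huv] at this
    · have := (le_readPath h.swap hx' v u).1 (h2 huv)
      rwa [min_eq_left huv] at this
  · intro hc
    have hx' : C x x x := h.mono hc le_rfl (by omega) (by omega)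
    refine ⟨(hk x).2 hx', fun huv => ?_, fun huv => ?_⟩
    · rw [le_readPath h hx', min_eq_left huv]; exact hc
    · rw [le_readPath h.swap hx', min_eq_left huv]; exact hc

/-- Reading off the paths and rebuilding the cubes gives back the cube set. -/
lemma cubes_readPath (h : IsCS r C) (hk : ∀ x, x < k ↔ C x x x) (i j l : ℕ) :
    cubes k (readPath r C) (readPath r fun i j l => C i l j) i j l ↔ C i j l := by
  simp only [cubes, shell_readPath h hk]
  constructor
  · rintro (⟨h1, h2, hs⟩ | ⟨h1, h2, hs⟩ | ⟨h1, h2, hs⟩)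
    · rwa [Nat.add_sub_cancel' h1, Nat.add_sub_cancel' h2] at hs
    · rw [Nat.add_sub_cancel' h1, Nat.add_sub_cancel' h2] at hs
      exact h.cyc hs
    · rw [Nat.add_sub_cancel' h1, Nat.add_sub_cancel' h2] at hs
      exact h.cyc (h.cyc hs)
  · intro hc
    by_cases h1 : i ≤ j ∧ i ≤ l
    · refine Or.inl ⟨h1.1, h1.2, ?_⟩
      rwa [Nat.add_sub_cancel' h1.1, Nat.add_sub_cancel' h1.2]
    · by_cases h2 : j ≤ l ∧ j ≤ i
      · refine Or.inr (Or.inl ⟨h2.1, h2.2, ?_⟩)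
        rw [Nat.add_sub_cancel' h2.1, Nat.add_sub_cancel' h2.2]
        exact h.cyc (h.cyc hc)
      · have h3 : l ≤ i ∧ l ≤ j := by omega
        refine Or.inr (Or.inr ⟨h3.1, h3.2, ?_⟩)
        rw [Nat.add_sub_cancel' h3.1, Nat.add_sub_cancel' h3.2]
        exact h.cyc hc

end inverse

/-! ### The volume in terms of paths -/

section volume
variable {k r : ℕ} {f g : ℕ → ℕ → ℕ}

open Classical in
lemma IsPair.card_above (h : IsPair k r f g) {x : ℕ} (hx : x < k) (u : ℕ) :
    #{v ∈ range r | u < v ∧ shell k f g x u v} = f u x - u := by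
  rw [← Nat.card_Ioc]
  congr 1
  ext v
  simp only [mem_filter, mem_range, mem_Ioc]
  constructor
  · rintro ⟨_, h2, hs⟩
    exact ⟨h2, hs.2.1 h2.le⟩
  · rintro ⟨h1, h2⟩
    exact ⟨h2.trans_lt (h.left.bd hx), h1, hx, fun _ => h2, fun _ => by omega⟩

open Classical in
lemma IsPair.card_below (h : IsPair k r f g) {x : ℕ} (hx : x < k) (v : ℕ) :
    #{u ∈ range r | v ≤ u ∧ shell k f g x u v} = g v x + 1 - v := by
  rw [← Nat.card_Icc]
  congr 1
  ext u
  simp only [mem_filter, mem_range, mem_Icc]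
  constructor
  · rintro ⟨_, h2, hs⟩
    exact ⟨h2, hs.2.2 h2⟩
  · rintro ⟨h1, h2⟩
    refine ⟨h2.trans_lt (h.right.bd hx), h1, hx, fun huv => ?_, fun _ => h2⟩
    obtain rfl : u = v := by omega
    exact h.swap.diag hx h2

open Classical in
/-- The cubes of a shell, without those on the axis `v = 0`, counted by means of the two paths. -/
lemma IsPair.sum_shell (h : IsPair k r f g) {x : ℕ} (hx : x < k) :
    ∑ u ∈ range r, ∑ v ∈ range r, (if 0 < v ∧ shell k f g x u v then 1 else 0) =
      f 0 x + ∑ a ∈ range r, (f (a + 1) x - (a + 1)) + ∑ a ∈ range r, (g (a + 1) x - a) := by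
  have h1 : ∀ u v : ℕ, (if 0 < v ∧ shell k f g x u v then 1 else 0) =
      (if u < v ∧ shell k f g x u v then 1 else 0) +
      (if 0 < v then (if v ≤ u ∧ shell k f g x u v then 1 else 0) else 0) := by
    intro u v
    by_cases hs : shell k f g x u v
    · simp only [hs, and_true]
      split_ifs <;> omega
    · simp [hs]
  have hf := h.left.bd (a := r) hx
  have hg := h.right.bd (a := r) hx
  simp only [h1, sum_add_distrib]
  congr 1
  · simp only [← card_filter, h.card_above hx]
    have h2 := sum_range_succ (fun u => f u x - u) r
    rw [sum_range_succ'] at h2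
    omega
  · rw [sum_comm]
    have h3 : ∀ v, ∑ u ∈ range r, (if 0 < v then
        (if v ≤ u ∧ shell k f g x u v then 1 else 0) else 0) =
        if 0 < v then g v x + 1 - v else 0 := by
      intro v
      split_ifs with hv
      · rw [← card_filter, h.card_below hx]
      · simp
    simp only [h3]
    have h2 := sum_range_succ (fun v => if 0 < v then g v x + 1 - v else 0) r
    rw [sum_range_succ'] at h2
    simp only [Nat.zero_lt_succ, if_true, lt_irrefl, if_false, Nat.add_sub_add_right] at h2
    split_ifs at h2 <;> omega

open Classical in
lemma IsPair.sum_shift (h : IsPair k r f g) (x : ℕ) :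
    ∑ j ∈ range r, ∑ l ∈ range r, (if (x ≤ j ∧ x < l) ∧ cubes k f g x j l then 1 else 0) =
      ∑ u ∈ range r, ∑ v ∈ range r, (if 0 < v ∧ shell k f g x u v then 1 else 0) := by
  rw [← sum_product', ← sum_product', ← card_filter, ← card_filter]
  refine card_nbij' (fun y => (y.1 - x, y.2 - x)) (fun y => (x + y.1, x + y.2)) ?_ ?_ ?_ ?_
  · rintro ⟨j, l⟩ hy
    simp only [coe_filter, mem_product, mem_range, Set.mem_ofPred_eq] at hy ⊢
    obtain ⟨⟨h1, h2⟩, ⟨h3, h4⟩, hc⟩ := hy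
    refine ⟨by omega, by omega, ?_⟩
    rw [← h.cubes_iff, Nat.add_sub_cancel' h3, Nat.add_sub_cancel' h4.le]
    exact hc
  · rintro ⟨u, v⟩ hy
    simp only [coe_filter, mem_product, mem_range, Set.mem_ofPred_eq] at hy ⊢
    obtain ⟨⟨h1, h2⟩, h3, hc⟩ := hy
    exact ⟨h.shell_bd hc, by omega, (h.cubes_iff _ _ _).2 hc⟩
  · rintro ⟨j, l⟩ hy
    simp only [coe_filter, mem_product, mem_range, Set.mem_ofPred_eq] at hy
    simp only [Prod.mk.injEq]
    omega
  · rintro ⟨u, v⟩ _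
    simp

open Classical in
/-- The number of cubes: `k` on the main diagonal, the others fall into three classes permuted by
rotation, according to which coordinate is the (first) smallest. -/
lemma IsPair.sum_cubes (h : IsPair k r f g) :
    ∑ i ∈ range r, ∑ j ∈ range r, ∑ l ∈ range r, (if cubes k f g i j l then 1 else 0) =
      k + 3 * ∑ x ∈ range k, (f 0 x + ∑ a ∈ range r, (f (a + 1) x - (a + 1)) +
        ∑ a ∈ range r, (g (a + 1) x - a)) := by
  set c := cubes k f g with hc
  have hcyc : ∀ i j l, c i j l ↔ c l i j :=
    fun i j l => ⟨cubes_cyc, fun hh => cubes_cyc (cubes_cyc hh)⟩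
  have hdiag : ∀ x, c x x x ↔ x < k := by
    intro x
    have := h.cubes_iff x 0 0
    rw [add_zero] at this
    rw [hc, this]
    simp [shell]
  have hkr : k ≤ r := by
    by_contra hlt
    have h1 : r < k := by omega
    have := h.left.add_lt h1 0
    omega
  have h1 : ∀ i j l, (if c i j l then 1 else 0) =
      (if (i ≤ j ∧ i < l) ∧ c i j l then 1 else 0) +
      (if (j ≤ l ∧ j < i) ∧ c j l i then 1 else 0) +
      (if (l ≤ i ∧ l < j) ∧ c l i j then 1 else 0) +
      (if i = j then (if j = l then (if c j j j then 1 else 0) else 0) else 0) := by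
    intro i j l
    have e1 := hcyc i j l
    have e2 := hcyc j l i
    by_cases hh : c i j l
    · have e3 := e1.1 hh
      have e4 := e2.2 hh
      simp only [hh, e3, e4, and_true, if_true]
      by_cases hij : i = j
      · subst hij
        by_cases hjl : i = l
        · subst hjl
          simp [hh]
        · simp only [hjl, if_true, if_false]
          split_ifs <;> omega
      · simp only [hij, if_false]
        split_ifs <;> omega
    · have e3 : ¬ c l i j := fun h' => hh (e1.2 h')
      have e4 : ¬ c j l i := fun h' => hh (e2.1 h')
      simp only [hh, e3, e4, and_false, if_false]
      split_ifs with h1 h2 h3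
      · subst h1; subst h2; exact absurd h3 hh
      all_goals rfl
  rw [sum_congr rfl fun i _ => sum_congr rfl fun j _ => sum_congr rfl fun l _ => h1 i j l]
  simp only [sum_add_distrib]
  have hP : ∑ i ∈ range r, ∑ j ∈ range r, ∑ l ∈ range r,
      (if (i ≤ j ∧ i < l) ∧ c i j l then 1 else 0) =
      ∑ x ∈ range k, (f 0 x + ∑ a ∈ range r, (f (a + 1) x - (a + 1)) +
        ∑ a ∈ range r, (g (a + 1) x - a)) := by
    rw [← sum_subset (range_mono hkr)]
    · refine sum_congr rfl fun x hx => ?_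
      rw [hc, h.sum_shift, h.sum_shell (mem_range.1 hx)]
    · intro x _ hx
      rw [hc, h.sum_shift]
      refine sum_eq_zero fun u _ => sum_eq_zero fun v _ => if_neg ?_
      rintro ⟨_, hs⟩
      exact hx (mem_range.2 hs.1)
  have hD : ∑ i ∈ range r, ∑ j ∈ range r, ∑ l ∈ range r,
      (if i = j then (if j = l then (if c j j j then 1 else 0) else 0) else 0) = k := by
    have : ∀ i ∈ range r, ∑ j ∈ range r, ∑ l ∈ range r,
        (if i = j then (if j = l then (if c j j j then 1 else 0) else 0) else 0) =
        if i < k then 1 else 0 := by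
      intro i hi
      rw [sum_eq_single_of_mem i hi, sum_eq_single_of_mem i hi]
      · simp [hdiag]
      · intro b _ hb; simp [hb.symm]
      · intro b _ hb; simp [hb.symm]
    rw [sum_congr rfl this, ← card_filter]
    have : filter (fun i => i < k) (range r) = range k := by
      ext i; simp only [mem_filter, mem_range]; omega
    rw [this, card_range]
  have h2 : ∑ i ∈ range r, ∑ j ∈ range r, ∑ l ∈ range r,
      (if (j ≤ l ∧ j < i) ∧ c j l i then 1 else 0) = ∑ i ∈ range r, ∑ j ∈ range r,
      ∑ l ∈ range r, (if (i ≤ j ∧ i < l) ∧ c i j l then 1 else 0) := by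
    rw [sum_comm]
    exact sum_congr rfl fun j _ => sum_comm
  have h3 : ∑ i ∈ range r, ∑ j ∈ range r, ∑ l ∈ range r,
      (if (l ≤ i ∧ l < j) ∧ c l i j then 1 else 0) = ∑ i ∈ range r, ∑ j ∈ range r,
      ∑ l ∈ range r, (if (i ≤ j ∧ i < l) ∧ c i j l then 1 else 0) := by
    rw [sum_congr rfl fun j _ => sum_comm, sum_comm]
  rw [h2, h3, hP, hD]
  simp only [sum_add_distrib]
  ring

end volume

/-! ### The determinant formula for the generating function -/

section cubeSets
variable {r : ℕ}

/-- The cube set of a plane partition, with 0-based natural number coordinates. -/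
def cubeRel (p : Fin r → Fin r → Fin (r + 1)) (i j l : ℕ) : Prop :=
  ∃ (hi : i < r) (hj : j < r), l < (p ⟨i, hi⟩ ⟨j, hj⟩ : ℕ)

lemma mem_CSPP {p : Fin r → Fin r → Fin (r + 1)} : p ∈ CSPP r ↔
    (∀ i i' j j' : Fin r, i ≤ i' → j ≤ j' → (p i' j' : ℕ) ≤ (p i j : ℕ)) ∧
    ∀ i j k : Fin r, ((k : ℕ) < (p i j : ℕ) ↔ (j : ℕ) < (p k i : ℕ)) := by
  simp only [CSPP, PP, mem_filter, mem_univ, true_and]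

lemma isCS_cubeRel {p : Fin r → Fin r → Fin (r + 1)} (hp : p ∈ CSPP r) : IsCS r (cubeRel p) := by
  rw [mem_CSPP] at hp
  have hb : ∀ {i j l}, cubeRel p i j l → i < r ∧ j < r ∧ l < r := by
    rintro i j l ⟨hi, hj, hl⟩
    have := (p ⟨i, hi⟩ ⟨j, hj⟩).2
    omega
  refine ⟨hb, ?_, ?_⟩
  · rintro i j l i' j' l' ⟨hi, hj, hl⟩ h1 h2 h3
    refine ⟨h1.trans_lt hi, h2.trans_lt hj, ?_⟩
    have := hp.1 ⟨i', h1.trans_lt hi⟩ ⟨i, hi⟩ ⟨j', h2.trans_lt hj⟩ ⟨j, hj⟩ h1 h2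
    omega
  · intro i j l hc
    have hlr := (hb hc).2.2
    obtain ⟨hi, hj, hl⟩ := hc
    exact ⟨hlr, hi, (hp.2 ⟨i, hi⟩ ⟨j, hj⟩ ⟨l, hlr⟩).1 hl⟩

lemma cubeRel_inj {p p' : Fin r → Fin r → Fin (r + 1)}
    (h : ∀ i j l, cubeRel p i j l ↔ cubeRel p' i j l) : p = p' := by
  ext i j
  refine eq_of_forall_lt_iff fun l => ?_
  have := h i j l
  simpa only [cubeRel, Fin.is_lt, exists_true_left, Fin.eta] using this

open Classical in
/-- The plane partition with a given cube set. -/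
noncomputable def ofCubes (r : ℕ) (C : ℕ → ℕ → ℕ → Prop) : Fin r → Fin r → Fin (r + 1) :=
  fun i j => ⟨#{l ∈ range r | C i j l}, by
    have := card_filter_le (range r) fun l => C i j l
    rw [card_range] at this
    omega⟩

lemma lt_ofCubes {C : ℕ → ℕ → ℕ → Prop} (h : IsCS r C) (i j : Fin r) (l : ℕ) :
    l < (ofCubes r C i j : ℕ) ↔ C i j l := by
  classical
  simp only [ofCubes]
  constructor
  · intro hl
    by_contra hc
    have h1 : {l ∈ range r | C i j l} ⊆ range l := by
      intro m hm
      rw [mem_filter] at hm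
      rw [mem_range]
      by_contra hml
      exact hc (h.mono hm.2 le_rfl le_rfl (by omega))
    have := card_le_card h1
    rw [card_range] at this
    omega
  · intro hc
    have h1 : range (l + 1) ⊆ {l ∈ range r | C i j l} := by
      intro m hm
      rw [mem_range] at hm
      have h2 := h.mono (l' := m) hc le_rfl le_rfl (by omega)
      exact mem_filter.2 ⟨mem_range.2 (h.bd h2).2.2, h2⟩
    have := card_le_card h1
    rw [card_range] at this
    omega

lemma cubeRel_ofCubes {C : ℕ → ℕ → ℕ → Prop} (h : IsCS r C) (i j l : ℕ) :
    cubeRel (ofCubes r C) i j l ↔ C i j l := by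
  simp only [cubeRel, lt_ofCubes h]
  exact ⟨fun ⟨_, _, hc⟩ => hc, fun hc => ⟨(h.bd hc).1, (h.bd hc).2.1, hc⟩⟩

lemma ofCubes_mem {C : ℕ → ℕ → ℕ → Prop} (h : IsCS r C) : ofCubes r C ∈ CSPP r := by
  rw [mem_CSPP]
  constructor
  · intro i i' j j' hi hj
    refine le_of_forall_lt fun l hl => ?_
    rw [lt_ofCubes h] at hl ⊢
    exact h.mono hl hi hj le_rfl
  · intro i j k
    rw [lt_ofCubes h, lt_ofCubes h]
    exact ⟨h.cyc, fun hc => h.cyc (h.cyc hc)⟩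

open Classical in
lemma vol_eq_sum (p : Fin r → Fin r → Fin (r + 1)) :
    vol p = ∑ i ∈ range r, ∑ j ∈ range r, ∑ l ∈ range r, (if cubeRel p i j l then 1 else 0) := by
  simp only [vol, sum_range (n := r) fun i => ∑ j ∈ range r, ∑ l ∈ range r,
    (if cubeRel p i j l then 1 else 0)]
  refine sum_congr rfl fun i _ => ?_
  rw [sum_range]
  refine sum_congr rfl fun j _ => ?_
  rw [← card_filter]
  have : {l ∈ range r | cubeRel p i j l} = range (p i j : ℕ) := by
    ext l
    have := (p i j).2
    simp only [mem_filter, mem_range, cubeRel, Fin.is_lt, exists_true_left, Fin.eta]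
    omega
  rw [this, card_range]

open Classical in
/-- The number of cubes on the main diagonal. -/
noncomputable def dg (p : Fin r → Fin r → Fin (r + 1)) : ℕ := #{x ∈ range r | cubeRel p x x x}

lemma dg_iff {p : Fin r → Fin r → Fin (r + 1)} (hp : p ∈ CSPP r) (x : ℕ) :
    x < dg p ↔ cubeRel p x x x := by
  classical
  have h := isCS_cubeRel hp
  constructor
  · intro hl
    by_contra hc
    have h1 : {x ∈ range r | cubeRel p x x x} ⊆ range x := by
      intro m hm
      rw [mem_filter] at hm
      rw [mem_range]
      by_contra hml
      exact hc (h.mono hm.2 (by omega) (by omega) (by omega))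
    have := card_le_card h1
    rw [card_range] at this
    rw [dg] at hl
    omega
  · intro hc
    have h1 : range (x + 1) ⊆ {x ∈ range r | cubeRel p x x x} := by
      intro m hm
      rw [mem_range] at hm
      have h2 := h.mono (i' := m) (j' := m) (l' := m) hc (by omega) (by omega) (by omega)
      exact mem_filter.2 ⟨mem_range.2 (h.bd h2).2.2, h2⟩
    have := card_le_card h1
    rw [card_range] at this
    rw [dg]
    omega

lemma dg_le (p : Fin r → Fin r → Fin (r + 1)) : dg p ≤ r := by
  classical
  have := card_filter_le (range r) fun x => cubeRel p x x x
  rwa [card_range] at this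

end cubeSets

section families
variable {k r : ℕ}

/-- A path family as a numerical function; it is extended constantly beyond time `r`. -/
def famFun (F : Fin (r + 1) → SA k r) (a x : ℕ) : ℕ :=
  if h : x < k then ((F ⟨min a r, by omega⟩).1 ⟨x, h⟩ : ℕ) else 0

lemma famFun_apply (F : Fin (r + 1) → SA k r) (a : Fin (r + 1)) (x : Fin k) :
    famFun F a x = ((F a).1 x : ℕ) := by
  have : (⟨min (a : ℕ) r, by omega⟩ : Fin (r + 1)) = a := by
    ext; simp only; omega
  simp only [famFun, Fin.is_lt, dif_pos, this, Fin.eta]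

lemma famFun_of_le (F : Fin (r + 1) → SA k r) {a : ℕ} (ha : r ≤ a) (x : ℕ) :
    famFun F (a + 1) x = famFun F a x := by
  simp only [famFun, min_eq_right ha, min_eq_right (ha.trans (Nat.le_succ a))]

lemma isPath_famFun {F : Fin (r + 1) → SA k r}
    (h : ∀ a : Fin r, Step a (F a.castSucc).1 (F a.succ).1) : IsPath k r (famFun F) := by
  have hb : ∀ {a x}, x < k → famFun F a x < r := by
    intro a x hx
    simp only [famFun, hx, dif_pos, Fin.is_lt]
  have key : ∀ {a x : ℕ} (ha : a < r) (hx : x < k),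
      famFun F a x = ((F (Fin.castSucc ⟨a, ha⟩)).1 ⟨x, hx⟩ : ℕ) ∧
      famFun F (a + 1) x = ((F (Fin.succ ⟨a, ha⟩)).1 ⟨x, hx⟩ : ℕ) := fun ha hx =>
    ⟨famFun_apply F (Fin.castSucc ⟨_, ha⟩) ⟨_, hx⟩, famFun_apply F (Fin.succ ⟨_, ha⟩) ⟨_, hx⟩⟩
  refine ⟨hb, ?_, ?_, ?_⟩
  · intro a x hx
    rcases Nat.lt_or_ge a r with ha | ha
    · rw [(key ha hx).1, (key ha hx).2]
      exact (h ⟨a, ha⟩).1 ⟨x, hx⟩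
    · rw [famFun_of_le F ha]
  · intro a x hx hs
    rcases Nat.lt_or_ge a r with ha | ha
    · rw [(key ha hx).2] at hs
      rw [(key ha hx).1, (key ha hx).2]
      exact congrArg _ ((h ⟨a, ha⟩).2.2 ⟨x, hx⟩ hs)
    · rw [famFun_of_le F ha]
  · intro a x hx
    rcases Nat.lt_or_ge a r with ha | ha
    · rw [(key ha hx).1, (key ha (by omega : x < k)).2]
      exact (h ⟨a, ha⟩).2.1 ⟨x, by omega⟩ ⟨x + 1, hx⟩ (by simp [Fin.lt_def])
    · have hx' : x < k := by omega
      rw [famFun_of_le F ha]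
      simp only [famFun, hx, hx', dif_pos]
      exact (F _).2 (by simp [Fin.lt_def])

lemma Good.isPair {x : (Fin (r + 1) → SA k r) × (Fin (r + 1) → SA k r)} (h : Good x) :
    IsPair k r (famFun x.1) (famFun x.2) where
  left := isPath_famFun h.2.2.1
  right := isPath_famFun h.2.2.2
  start := by
    intro y hy
    have h1 := famFun_apply x.1 0 ⟨y, hy⟩
    have h2 := famFun_apply x.2 0 ⟨y, hy⟩
    rw [h.1] at h1
    exact h1.trans h2.symm
  final := by
    intro y hy
    have h1 := famFun_apply x.1 (Fin.last r) ⟨y, hy⟩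
    have h2 := famFun_apply x.2 (Fin.last r) ⟨y, hy⟩
    rw [h.2.1] at h1
    exact h1.trans h2.symm

lemma famFun_inj {F G : Fin (r + 1) → SA k r} (h : ∀ a x, x < k → famFun F a x = famFun G a x) :
    F = G := by
  funext a
  apply Subtype.ext
  funext x
  apply Fin.ext
  rw [← famFun_apply, ← famFun_apply]
  exact h a x x.2

lemma wt_eq (x : (Fin (r + 1) → SA k r) × (Fin (r + 1) → SA k r)) :
    wt x = ∑ i ∈ range k, (famFun x.1 0 i + ∑ a ∈ range r, (famFun x.1 (a + 1) i - (a + 1)) +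
        ∑ a ∈ range r, (famFun x.2 (a + 1) i - a)) := by
  simp only [sum_add_distrib]
  rw [wt]
  rw [sum_comm (s := range k) (t := range r), sum_comm (s := range k) (t := range r)]
  simp only [sum_range]
  congr 1
  · congr 1
    · exact sum_congr rfl fun i _ => (famFun_apply x.1 0 i).symm
    · refine sum_congr rfl fun a _ => sum_congr rfl fun i _ => ?_
      have := famFun_apply x.1 a.succ i
      rw [Fin.val_succ] at this
      rw [this]
  · refine sum_congr rfl fun a _ => sum_congr rfl fun i _ => ?_
    have := famFun_apply x.2 a.succ i
    rw [Fin.val_succ] at this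
    rw [this]

lemma IsPath.inter_lt {f : ℕ → ℕ → ℕ} (h : IsPath k r f) {a x y : ℕ} (hxy : x < y) (hy : y < k) :
    f a y < f (a + 1) x := by
  induction y, hxy using Nat.le_induction with
  | base => exact h.inter hy
  | succ y hy' ih =>
    have h1 := ih (by omega)
    have h2 := h.inter (a := a) hy
    have h3 := h.mono (a := a) (x := y) (by omega)
    omega

lemma IsPath.eq_min {f : ℕ → ℕ → ℕ} (h : IsPath k r f) {x : ℕ} (hx : x < k) (a : ℕ) :
    f (min a r) x = f a x := by
  rcases le_total a r with ha | ha
  · rw [min_eq_left ha]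
  · rw [min_eq_right ha]
    induction a, ha using Nat.le_induction with
    | base => rfl
    | succ a ha ih =>
      rw [ih, h.halt hx ((h.bd hx).trans_le ha)]

/-- The path family with given positions. -/
def IsPath.fam {f : ℕ → ℕ → ℕ} (h : IsPath k r f) (a : Fin (r + 1)) : SA k r :=
  ⟨fun x => ⟨f a x, h.bd x.2⟩, fun x y hxy => (h.inter_lt hxy y.2).trans_le (h.mono x.2)⟩

lemma IsPath.famFun_fam {f : ℕ → ℕ → ℕ} (h : IsPath k r f) (a : ℕ) {x : ℕ} (hx : x < k) :
    famFun h.fam a x = f a x := by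
  simp only [famFun, hx, dif_pos, IsPath.fam]
  exact h.eq_min hx a

lemma IsPath.step_fam {f : ℕ → ℕ → ℕ} (h : IsPath k r f) (a : Fin r) :
    Step a (h.fam a.castSucc).1 (h.fam a.succ).1 := by
  refine ⟨fun j => h.mono j.2, fun i j hij => h.inter_lt hij j.2, fun j hj => ?_⟩
  exact Fin.ext (h.halt j.2 hj)

lemma IsPair.good_fam {f g : ℕ → ℕ → ℕ} (h : IsPair k r f g) : Good (h.left.fam, h.right.fam) :=
  ⟨Subtype.ext (funext fun x => Fin.ext (h.start x.2)),
    Subtype.ext (funext fun x => Fin.ext (h.final x.2)), h.left.step_fam, h.right.step_fam⟩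

lemma cubes_congr {f g f' g' : ℕ → ℕ → ℕ} (hf : ∀ a x, x < k → f a x = f' a x)
    (hg : ∀ a x, x < k → g a x = g' a x) (i j l : ℕ) : cubes k f g i j l ↔ cubes k f' g' i j l := by
  have hs : ∀ x u v, shell k f g x u v ↔ shell k f' g' x u v := by
    intro x u v
    refine and_congr_right fun hx => ?_
    rw [hf u x hx, hg v x hx]
  simp only [cubes, hs]

open Classical in
/-- Cyclically symmetric plane partitions with `k` diagonal cubes correspond to pairs of families
of `k` nonintersecting paths. -/
lemma sum_dg_eq {R : Type*} [CommRing R] (q : R) (k r : ℕ) :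
    ∑ x : (Fin (r + 1) → SA k r) × (Fin (r + 1) → SA k r) with Good x, q ^ (k + 3 * wt x) =
      ∑ p ∈ CSPP r with dg p = k, q ^ vol p := by
  have hcube : ∀ x : (Fin (r + 1) → SA k r) × (Fin (r + 1) → SA k r), Good x → ∀ i j l,
      cubeRel (ofCubes r (cubes k (famFun x.1) (famFun x.2))) i j l ↔
        cubes k (famFun x.1) (famFun x.2) i j l :=
    fun x hx => cubeRel_ofCubes hx.isPair.isCS
  refine sum_bij (fun x _ => ofCubes r (cubes k (famFun x.1) (famFun x.2))) ?_ ?_ ?_ ?_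
  · intro x hx
    rw [mem_filter] at hx ⊢
    have hm := ofCubes_mem hx.2.isPair.isCS
    refine ⟨hm, eq_of_forall_lt_iff fun y => ?_⟩
    rw [dg_iff hm, hcube x hx.2]
    have := hx.2.isPair.cubes_iff y 0 0
    rw [add_zero] at this
    rw [this]
    simp [shell]
  · intro x hx y hy hxy
    replace hx := (mem_filter.1 hx).2
    replace hy := (mem_filter.1 hy).2
    have hc : ∀ i j l, cubes k (famFun x.1) (famFun x.2) i j l ↔
        cubes k (famFun y.1) (famFun y.2) i j l := by
      intro i j l
      rw [← hcube x hx, ← hcube y hy, hxy]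
    refine Prod.ext (famFun_inj fun a b hb => ?_) (famFun_inj fun a b hb => ?_)
    · refine eq_of_forall_le_iff fun v => ?_
      rw [hx.isPair.le_left_iff hb, hy.isPair.le_left_iff hb, hc]
    · refine eq_of_forall_le_iff fun v => ?_
      rw [hx.isPair.le_right_iff hb, hy.isPair.le_right_iff hb, hc]
  · intro p hp
    obtain ⟨hp, hk⟩ := mem_filter.1 hp
    have hcs := isCS_cubeRel hp
    have hk' : ∀ x, x < k ↔ cubeRel p x x x := by
      intro x
      rw [← hk, dg_iff hp]
    have hpair := isPair_readPath hcs hk'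
    refine ⟨(hpair.left.fam, hpair.right.fam), mem_filter.2 ⟨mem_univ _, hpair.good_fam⟩, ?_⟩
    refine cubeRel_inj fun i j l => ?_
    rw [hcube _ hpair.good_fam, ← cubes_readPath hcs hk']
    exact cubes_congr (fun a x hx => hpair.left.famFun_fam a hx)
      (fun a x hx => hpair.right.famFun_fam a hx) i j l
  · intro x hx
    replace hx := (mem_filter.1 hx).2
    congr 1
    rw [vol_eq_sum, wt_eq, ← hx.isPair.sum_cubes]
    simp only [hcube x hx]

/-- The volume generating function of cyclically symmetric plane partitions is a determinant. -/
lemma gf_eq_det {R : Type*} [CommRing R] (q : R) (r : ℕ) :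
    ∑ p ∈ CSPP r, q ^ vol p = (1 + Qm q r).det := by
  classical
  rw [det_eq_sum_paths, ← sum_fiberwise_of_maps_to (t := range (r + 1)) (g := dg)
    fun p _ => mem_range.2 (Nat.lt_succ_of_le (dg_le p))]
  refine sum_congr rfl fun k _ => ?_
  rw [sum_dg_eq q k r]

end families

/-! ### Fourier transform as a product over the roots -/

/-- A nontrivial `N`-th root of unity has distance at least `1 / N` from `1`: the relation
`∑ ζ ^ k = 0` gives `N = ∑ (1 - ζ ^ k)`, where each of the `N` terms has norm at most `N ‖1 - ζ‖`. -/
lemma norm_one_sub_ge {ζ : ℂ} {N : ℕ} (hN : 0 < N) (h : ζ ^ N = 1) (h1 : ζ ≠ 1) :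
    1 / (N:ℝ) ≤ ‖1 - ζ‖ := by
  have hn : ‖ζ‖ = 1 := Complex.norm_eq_one_of_pow_eq_one h hN.ne'
  have hs : ∑ k ∈ range N, ζ ^ k = 0 := by
    have := mul_neg_geom_sum ζ N
    rw [h, sub_self] at this
    exact (mul_eq_zero.mp this).resolve_left (sub_ne_zero.mpr h1.symm)
  have hk : ∀ k : ℕ, ‖1 - ζ ^ k‖ ≤ k * ‖1 - ζ‖ := by
    intro k
    rw [← mul_neg_geom_sum, norm_mul, mul_comm]
    gcongr
    refine (norm_sum_le _ _).trans ?_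
    simp [hn]
  have h2 : (N:ℝ) ≤ N * (N * ‖1 - ζ‖) := by
    calc (N:ℝ) = ‖∑ k ∈ range N, (1 - ζ ^ k)‖ := by
          rw [sum_sub_distrib, hs]; simp
      _ ≤ ∑ k ∈ range N, ‖1 - ζ ^ k‖ := norm_sum_le _ _
      _ ≤ ∑ k ∈ range N, N * ‖1 - ζ‖ := by
          refine sum_le_sum fun k hk' => (hk k).trans ?_
          gcongr
          exact (mem_range.mp hk').le
      _ = _ := by simp
  have hN' : (0:ℝ) < N := by exact_mod_cast hN
  rw [div_le_iff₀ hN']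
  nlinarith

/-- The real number `c` with `(1 + ζ) / (1 - ζ) = c I`, for `ζ` on the unit circle: this is
`cot (α / 2)` for `ζ = exp (α I)`. -/
noncomputable def cotHalf (ζ : ℂ) : ℝ := ((1 + ζ) / (1 - ζ)).im

lemma cotHalf_mul {ζ : ℂ} (hn : ‖ζ‖ = 1) (h1 : ζ ≠ 1) :
    1 + ζ = (1 - ζ) * ((cotHalf ζ : ℂ) * Complex.I) := by
  have h0 : 1 - ζ ≠ 0 := sub_ne_zero.mpr h1.symm
  have hre : ((1 + ζ) / (1 - ζ)).re = 0 := by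
    have hsq : ζ.re * ζ.re + ζ.im * ζ.im = 1 := by
      have := Complex.sq_norm ζ
      rw [hn, Complex.normSq_apply] at this; linarith
    rw [Complex.div_re]
    simp
    rw [← add_div]
    rw [div_eq_zero_iff]; left; linarith
  have : (1 + ζ) / (1 - ζ) = (cotHalf ζ : ℂ) * Complex.I := by
    apply Complex.ext <;> simp [cotHalf, hre]
  rw [← this]; field_simp

lemma one_add_cotHalf_sq {ζ : ℂ} (hn : ‖ζ‖ = 1) (h1 : ζ ≠ 1) :
    1 + cotHalf ζ ^ 2 = 4 / ‖1 - ζ‖ ^ 2 := by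
  have h0 : 1 - ζ ≠ 0 := sub_ne_zero.mpr h1.symm
  have hm := cotHalf_mul hn h1
  have e : ((1 + cotHalf ζ ^ 2 : ℝ) : ℂ) * (1 - ζ) ^ 2 = - 4 * ζ := by
    push_cast
    have hI := Complex.I_sq
    have : (1 + ζ) ^ 2 = (1 - ζ)^2 * ((cotHalf ζ : ℂ)^2 * (-1)) := by
      rw [hm, ← hI]; ring
    linear_combination this
  have e2 := congrArg norm e
  rw [norm_mul, norm_mul, norm_pow, hn, Complex.norm_real, Real.norm_of_nonneg (by positivity)] at e2
  have : ‖1 - ζ‖ ≠ 0 := norm_ne_zero_iff.mpr h0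
  rw [eq_div_iff (by positivity), e2]; simp

open Polynomial in
/-- Product formula for the centred Fourier transform of a polynomial whose roots are
on the unit circle. -/
lemma fourier_prod {ι : Type*} (S : Finset ι) (hS : S.Nonempty) (v : ι → ℕ) (n N : ℕ) (P : ℂ[X])
    (hP : P = ∑ x ∈ S, X ^ v x) (hdeg : P.natDegree ≤ n) (hcard : Multiset.card P.roots = n)
    (hroots : ∀ ζ ∈ P.roots, ∃ d ∈ Icc 1 N, ζ ^ d = 1) :
    ∃ cs : Multiset ℝ, Multiset.card cs = n ∧ (∀ c ∈ cs, 1 + c ^ 2 ≤ 4 * (N:ℝ) ^ 2) ∧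
      ∀ θ : ℝ, ∑ x ∈ S, Complex.exp (((θ * (v x - n / 2) : ℝ) : ℂ) * Complex.I) =
        (((#S : ℝ) * (cs.map fun c => Real.cos (θ/2) - c * Real.sin (θ/2)).prod : ℝ) : ℂ) := by
  have hP1 : P.eval 1 = #S := by rw [hP]; simp [eval_finsetSum]
  have hS0 : (#S : ℂ) ≠ 0 := by exact_mod_cast hS.card_pos.ne'
  have hz : ∀ ζ ∈ P.roots, ‖ζ‖ = 1 ∧ ζ ≠ 1 := by
    intro ζ hζ
    obtain ⟨d, hd, h⟩ := hroots ζ hζ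
    have hd1 := (mem_Icc.mp hd).1
    refine ⟨Complex.norm_eq_one_of_pow_eq_one h (by omega), ?_⟩
    rintro rfl
    have := isRoot_of_mem_roots hζ
    rw [IsRoot.def, hP1] at this
    exact hS0 this
  have hfac : P = C P.leadingCoeff * (P.roots.map fun a => X - C a).prod :=
    (C_leadingCoeff_mul_prod_multiset_X_sub_C (le_antisymm (card_roots' P) (by omega))).symm
  have heval : ∀ z : ℂ, P.eval z = P.leadingCoeff * (P.roots.map fun a => z - a).prod := by
    intro z
    conv_lhs => rw [hfac]
    rw [eval_mul, eval_C, eval_multiset_prod, Multiset.map_map]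
    simp
  refine ⟨P.roots.map cotHalf, by simpa using hcard, ?_, ?_⟩
  · intro c hc
    obtain ⟨ζ, hζ, rfl⟩ := Multiset.mem_map.mp hc
    obtain ⟨d, hd, h⟩ := hroots ζ hζ
    obtain ⟨hd1, hd2⟩ := mem_Icc.mp hd
    rw [one_add_cotHalf_sq (hz ζ hζ).1 (hz ζ hζ).2]
    have h3 := norm_one_sub_ge (by omega) h (hz ζ hζ).2
    have hd' : (0:ℝ) < d := by exact_mod_cast hd1
    have hdN : (d:ℝ) ≤ N := by exact_mod_cast hd2
    have h4 : 0 < ‖1 - ζ‖ := lt_of_lt_of_le (by positivity) h3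
    rw [div_le_iff₀ hd'] at h3
    rw [div_le_iff₀ (by positivity)]
    have : 1 ≤ (‖1 - ζ‖ * N)^2 := by
      apply one_le_pow₀
      nlinarith
    nlinarith
  · intro θ
    set E := Complex.exp ((θ/2 : ℝ) * Complex.I) with hE
    have hE0 : E ≠ 0 := Complex.exp_ne_zero _
    have hEinv : E⁻¹ = Complex.exp (-((θ/2 : ℝ) * Complex.I)) := by rw [hE, Complex.exp_neg]
    have h1 : ∑ x ∈ S, Complex.exp (((θ * (v x - n / 2) : ℝ) : ℂ) * Complex.I) =
        E⁻¹ ^ n * P.eval (E ^ 2) := by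
      rw [hP, eval_finsetSum, mul_sum]
      refine sum_congr rfl fun x _ => ?_
      rw [eval_pow, eval_X, hEinv, hE, ← Complex.exp_nat_mul, ← Complex.exp_nat_mul, ← Complex.exp_nat_mul, ← Complex.exp_add]
      congr 1; push_cast; ring
    have h2 : E⁻¹ ^ n * (P.roots.map fun a => E ^ 2 - a).prod =
        (P.roots.map fun a => 1 - a).prod *
        (P.roots.map fun a => ((Real.cos (θ/2) - cotHalf a * Real.sin (θ/2) : ℝ) : ℂ)).prod := by
      rw [← Multiset.prod_map_mul, ← hcard, ← Multiset.prod_replicate, ← Multiset.map_const', ← Multiset.prod_map_mul]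
      congr 1
      refine Multiset.map_congr rfl fun ζ hζ => ?_
      have hm := cotHalf_mul (hz ζ hζ).1 (hz ζ hζ).2
      have c1 : E = Real.cos (θ/2) + Real.sin (θ/2) * Complex.I := by
        rw [hE, Complex.exp_mul_I]; push_cast; rfl
      have c2 : E⁻¹ = Real.cos (θ/2) - Real.sin (θ/2) * Complex.I := by
        rw [hEinv, ← neg_mul, Complex.exp_mul_I]; push_cast; rw [Complex.cos_neg, Complex.sin_neg]; ring
      have c3 : E⁻¹ * (E^2 - ζ) = E - ζ * E⁻¹ := by field_simp
      rw [c3, c2, c1]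
      push_cast
      have hI := Complex.I_sq
      linear_combination (Complex.sin (θ/2) * Complex.I) * hm + (1 - ζ) * cotHalf ζ * Complex.sin (θ/2) * hI
    rw [h1, heval, mul_left_comm, h2, ← mul_assoc, ← heval, hP1]
    rw [Complex.ofReal_mul, Complex.ofReal_natCast]
    congr 1
    rw [← Complex.ofRealHom_eq_coe, map_multiset_prod, Multiset.map_map, Multiset.map_map]
    rfl

/-! ### Moments -/

lemma prod_one_sub_expand (m : Multiset ℝ) : ∃ h : ℝ → ℝ, Continuous h ∧ h 0 = m.sum ∧
    ∀ u, (m.map fun β => 1 - β * u).prod = 1 - u * h u := by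
  induction m using Multiset.induction_on with
  | empty => exact ⟨fun _ => 0, continuous_const, by simp, by simp⟩
  | cons β m ih =>
    obtain ⟨h, hc, h0, hu⟩ := ih
    refine ⟨fun u => β + h u - β * u * h u, by fun_prop, by simp [h0], fun u => ?_⟩
    rw [Multiset.map_cons, Multiset.prod_cons, hu]; ring

lemma sin_sq_half (y : ℝ) : Real.sin y ^ 2 = y ^ 2 * Real.sinc y ^ 2 := by
  by_cases h : y = 0
  · simp [h]
  · rw [Real.sinc_of_ne_zero h]; field_simp

/-- Mean and variance read off from the product formula for the Fourier transform. -/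
lemma moments_of_fourier {ι : Type*} (S : Finset ι) (hS : S.Nonempty) (v : ι → ℕ) (n : ℕ)
    (cs : Multiset ℝ)
    (hF : ∀ θ : ℝ, ∑ x ∈ S, Complex.exp (((θ * (v x - n / 2) : ℝ) : ℂ) * Complex.I) =
        (((#S : ℝ) * (cs.map fun c => Real.cos (θ/2) - c * Real.sin (θ/2)).prod : ℝ) : ℂ)) :
    (∑ x ∈ S, (v x : ℝ)) / (#S : ℝ) = n / 2 ∧
    (∑ x ∈ S, ((v x : ℝ) - n / 2) ^ 2) / (#S : ℝ) = (cs.map fun c : ℝ => 1 + c ^ 2).sum / 4 ∧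
    ∀ θ : ℝ, ((cs.map fun c => Real.cos (θ/2) - c * Real.sin (θ/2)).prod) ^ 2 =
      ((cs.map fun c => 1 + c^2).map fun β => 1 - β * Real.sin (θ/2) ^ 2).prod := by
  have hN : (#S : ℝ) ≠ 0 := by exact_mod_cast hS.card_pos.ne'
  set a : ι → ℝ := fun x => v x - n / 2 with ha
  set W : ℝ → ℝ := fun θ => (cs.map fun c => Real.cos (θ/2) - c * Real.sin (θ/2)).prod with hW
  have hsin : ∀ θ : ℝ, ∑ x ∈ S, Real.sin (θ * a x) = 0 := by
    intro θ
    have := congrArg Complex.im (hF θ)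
    rw [Complex.ofReal_im, Complex.im_sum] at this
    rw [← this]
    refine sum_congr rfl fun x _ => ?_
    rw [Complex.exp_ofReal_mul_I_im]
  have hcos : ∀ θ : ℝ, ∑ x ∈ S, Real.cos (θ * a x) = #S * W θ := by
    intro θ
    have := congrArg Complex.re (hF θ)
    rw [Complex.ofReal_re, Complex.re_sum] at this
    rw [← this]
    refine sum_congr rfl fun x _ => ?_
    rw [Complex.exp_ofReal_mul_I_re]
  have hsum : ∑ x ∈ S, a x = 0 := by
    have h1 : HasDerivAt (fun θ : ℝ => ∑ x ∈ S, Real.sin (θ * a x)) (∑ x ∈ S, a x) 0 := by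
      apply HasDerivAt.fun_sum
      intro x _
      have := ((hasDerivAt_id (0:ℝ)).mul_const (a x)).sin
      simpa using this
    have h2 : (fun θ : ℝ => ∑ x ∈ S, Real.sin (θ * a x)) = fun _ => 0 := funext hsin
    rw [h2] at h1
    exact h1.unique (hasDerivAt_const _ _)
  have hWeven : ∀ θ, W (-θ) = W θ := by
    intro θ
    have h1 := hcos θ
    have h2 := hcos (-θ)
    simp only [neg_mul, Real.cos_neg] at h2
    rw [h1] at h2
    exact (mul_left_cancel₀ hN h2).symm
  have hsq : ∀ θ, W θ ^ 2 = ((cs.map fun c => 1 + c^2).map fun β => 1 - β * Real.sin (θ/2) ^ 2).prod := by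
    intro θ
    rw [pow_two]
    nth_rewrite 2 [← hWeven θ]
    simp only [hW]
    rw [← Multiset.prod_map_mul, Multiset.map_map]
    congr 1
    refine Multiset.map_congr rfl fun c _ => ?_
    rw [neg_div, Real.cos_neg, Real.sin_neg]
    have := Real.sin_sq_add_cos_sq (θ/2)
    simp only [Function.comp]
    linear_combination this
  refine ⟨?_, ?_, hsq⟩
  · simp only [ha, sum_sub_distrib, sum_const, nsmul_eq_mul] at hsum
    field_simp
    linarith
  · obtain ⟨h, hc, h0, hu⟩ := prod_one_sub_expand (cs.map fun c => 1 + c^2)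
    -- both sides of `1 - W² = 1 - ∏ (1 - β u)` are `θ²` times a continuous function of `θ`
    let A : ℝ → ℝ := fun θ => (∑ x ∈ S, a x ^ 2 / 2 * Real.sinc (θ * a x / 2) ^ 2) / #S
    have hA : ∀ θ, 1 - W θ = θ ^ 2 * A θ := by
      intro θ
      have h1 : W θ = (∑ x ∈ S, Real.cos (θ * a x)) / #S := by rw [hcos]; field_simp
      have h2 : ∀ x, Real.cos (θ * a x) = 1 - θ^2 * (a x ^ 2 / 2 * Real.sinc (θ * a x / 2) ^ 2) := by
        intro x
        have e1 := Real.cos_sq (θ * a x / 2)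
        have e2 := Real.sin_sq_add_cos_sq (θ * a x / 2)
        have e3 := sin_sq_half (θ * a x / 2)
        rw [mul_div_cancel₀ _ (two_ne_zero)] at e1
        linear_combination -2 * e1 + 2 * e2 - 2 * e3
      rw [h1]
      simp only [h2, A, sum_sub_distrib, ← mul_sum, sum_const, nsmul_eq_mul, mul_one]
      field_simp; ring
    have hAc : Continuous A := by
      have := Real.continuous_sinc
      fun_prop
    have hWc : Continuous W := by
      have : W = fun θ => 1 - θ ^ 2 * A θ := funext fun θ => by rw [← hA]; ring
      rw [this]; fun_prop
    have key : (fun θ => A θ * (1 + W θ)) =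
        fun θ => Real.sinc (θ/2) ^ 2 / 4 * h (Real.sin (θ/2) ^ 2) := by
      have hs := Real.continuous_sinc
      apply Continuous.ext_on (dense_compl_singleton (0:ℝ)) (by fun_prop) (by fun_prop)
      intro θ hθ
      have hθ' : θ ≠ 0 := hθ
      have e1 := hsq θ
      rw [hu, sin_sq_half] at e1
      have e2 : θ ^ 2 * (A θ * (1 + W θ)) = θ ^ 2 * (Real.sinc (θ/2) ^ 2 / 4 * h (Real.sin (θ/2) ^ 2)) := by
        rw [sin_sq_half]
        linear_combination -(1 + W θ) * hA θ - e1
      exact mul_left_cancel₀ (pow_ne_zero 2 hθ') e2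
    have k0 := congrFun key 0
    have hW0 : W 0 = 1 := by have := hA 0; simp at this; linarith
    simp only [hW0, A, zero_mul, zero_div, Real.sinc_zero, Real.sin_zero] at k0
    rw [zero_pow two_ne_zero, h0] at k0
    simp only [one_pow, mul_one, ← sum_div] at k0
    have k1 : (∑ x ∈ S, a x ^ 2) / (#S : ℝ) = (∑ x ∈ S, a x ^ 2) / 2 / (#S : ℝ) * (1 + 1) := by
      ring
    rw [k1, k0]; ring

/-! ### Gaussian limit of the products -/

lemma exp_bounds {x M : ℝ} (hx : 0 ≤ x) (hxM : x ≤ M) (hM : M ≤ 1/2) :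
    Real.exp (-((1 + 2 * M) * x)) ≤ 1 - x ∧ 1 - x ≤ Real.exp (-x) := by
  have h1 : 0 < 1 - x := by linarith
  constructor
  · rw [← Real.le_log_iff_exp_le h1]
    have := Real.one_sub_inv_le_log_of_pos h1
    refine le_trans ?_ this
    rw [← sub_nonneg]
    have : 1 - (1 - x)⁻¹ - -((1 + 2 * M) * x) = x * (2 * M * (1 - x) - x) / (1 - x) := by
      field_simp; ring
    rw [this]
    apply div_nonneg _ h1.le
    apply mul_nonneg hx
    nlinarith
  · have := Real.add_one_le_exp (-x); linarith

/-- If all `β u` are at most `M ≤ 1/2`, then `∏ (1 - β u)` is trapped between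
`exp (-(1 + 2 M) u ∑ β)` and `exp (-u ∑ β)`. -/
lemma prod_bounds (m : Multiset ℝ) (u M : ℝ) (hM : M ≤ 1/2)
    (h : ∀ β ∈ m, 0 ≤ β * u ∧ β * u ≤ M) :
    Real.exp (-((1 + 2 * M) * (u * m.sum))) ≤ (m.map fun β => 1 - β * u).prod ∧
    (m.map fun β => 1 - β * u).prod ≤ Real.exp (-(u * m.sum)) := by
  induction m using Multiset.induction_on with
  | empty => simp
  | cons β m ih =>
    obtain ⟨i1, i2⟩ := ih fun b hb => h b (Multiset.mem_cons_of_mem hb)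
    obtain ⟨h0, h1⟩ := h β (Multiset.mem_cons_self _ _)
    obtain ⟨e1, e2⟩ := exp_bounds h0 h1 hM
    rw [Multiset.map_cons, Multiset.prod_cons, Multiset.sum_cons]
    have p0 : 0 ≤ (m.map fun β => 1 - β * u).prod := (Real.exp_pos _).le.trans i1
    constructor
    · calc _ = Real.exp (-((1 + 2 * M) * (β * u))) * Real.exp (-((1 + 2 * M) * (u * m.sum))) := by
            rw [← Real.exp_add]; ring_nf
        _ ≤ _ := mul_le_mul e1 i1 (Real.exp_pos _).le (by linarith)
    · calc _ ≤ Real.exp (-(β * u)) * Real.exp (-(u * m.sum)) :=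
            mul_le_mul e2 i2 p0 (Real.exp_pos _).le
        _ = _ := by rw [← Real.exp_add]; ring_nf

/-- The Gaussian limit of the products `∏ (cos (θ/2) - c sin (θ/2))` at `θ = t/σ`, where
`σ² = ∑ (1 + c²) / 4`. -/
lemma tendsto_prod (cs : ℕ → Multiset ℝ) (s : ℕ → ℝ)
    (hcard : ∀ᶠ r in atTop, Multiset.card (cs r) = r ^ 3)
    (hc : ∀ᶠ r : ℕ in atTop, ∀ c ∈ cs r, 1 + c ^ 2 ≤ 324 * (r : ℝ) ^ 2)
    (hs : ∀ᶠ r in atTop, s r = √(((cs r).map fun c : ℝ => 1 + c ^ 2).sum / 4))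
    (hsq : ∀ᶠ r in atTop, ∀ θ : ℝ,
      (((cs r).map fun c => Real.cos (θ/2) - c * Real.sin (θ/2)).prod) ^ 2 =
      (((cs r).map fun c : ℝ => 1 + c^2).map fun β => 1 - β * Real.sin (θ/2) ^ 2).prod) (t : ℝ) :
    Tendsto (fun r => ((cs r).map fun c => Real.cos (t / s r /2) - c * Real.sin (t / s r/2)).prod)
      atTop (nhds (Real.exp (-(t^2/2)))) := by
  -- lower bound for the variance
  have hvar : ∀ᶠ r : ℕ in atTop, 0 < r ∧ (r:ℝ) ^ 3 / 4 ≤ s r ^ 2 ∧ 0 < s r ∧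
      s r ^ 2 = ((cs r).map fun c : ℝ => 1 + c ^ 2).sum / 4 := by
    filter_upwards [hcard, hs, eventually_gt_atTop 0] with r h1 h2 h3
    have h4 : (r:ℝ) ^ 3 ≤ ((cs r).map fun c : ℝ => 1 + c ^ 2).sum := by
      have := Multiset.card_nsmul_le_sum (s := (cs r).map fun c : ℝ => 1 + c ^ 2) (a := 1) (by
        intro x hx
        obtain ⟨c, _, rfl⟩ := Multiset.mem_map.1 hx
        nlinarith [sq_nonneg c])
      rw [Multiset.card_map, h1, nsmul_eq_mul, mul_one] at this
      exact_mod_cast this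
    have h5 : (0:ℝ) < (r:ℝ)^3 := by positivity
    have h6 : s r ^ 2 = ((cs r).map fun c : ℝ => 1 + c ^ 2).sum / 4 := by
      rw [h2, Real.sq_sqrt]; linarith
    refine ⟨h3, by linarith, ?_, h6⟩
    rw [h2]; apply Real.sqrt_pos.2; linarith
  have hsinf : Tendsto s atTop atTop := by
    have h1 : Tendsto (fun r : ℕ => √((r:ℝ)/4)) atTop atTop :=
      Real.tendsto_sqrt_atTop.comp ((tendsto_natCast_atTop_atTop (R := ℝ)).atTop_div_const (by norm_num))
    refine tendsto_atTop_mono' _ ?_ h1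
    filter_upwards [hvar] with r ⟨h0, h1, h2, _⟩
    apply Real.sqrt_le_iff.2 ⟨h2.le, le_trans ?_ h1⟩
    have : (1:ℝ) ≤ r := by exact_mod_cast h0
    have : (1:ℝ) ≤ (r:ℝ)^2 := by nlinarith
    have e : (r:ℝ)^3 = r * r^2 := by ring
    rw [e]
    nlinarith
  have hth : Tendsto (fun r => t / s r / 2) atTop (nhds 0) := by
    have := (hsinf.const_div_atTop t).div_const 2
    simpa using this
  -- `u ∑ β → t²`
  have hu : Tendsto (fun r => Real.sin (t / s r / 2) ^ 2 * ((cs r).map fun c : ℝ => 1 + c ^ 2).sum)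
      atTop (nhds (t^2)) := by
    have h1 : Tendsto (fun r => t ^ 2 * Real.sinc (t / s r / 2) ^ 2) atTop (nhds (t^2)) := by
      have := ((Real.continuous_sinc.tendsto 0).comp hth).pow 2 |>.const_mul (t^2)
      simpa using this
    refine h1.congr' ?_
    filter_upwards [hvar] with r ⟨_, _, h2, h3⟩
    have h4 : ((cs r).map fun c : ℝ => 1 + c ^ 2).sum = 4 * s r ^ 2 := by linarith
    rw [h4, sin_sq_half]
    field_simp
    ring
  let M : ℕ → ℝ := fun r => 324 * t ^ 2 / r
  have hM0 : Tendsto M atTop (nhds 0) := tendsto_const_div_atTop_nhds_zero_nat _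
  have hMhalf : ∀ᶠ r in atTop, M r ≤ 1/2 := hM0.eventually_le_const (by norm_num)
  have hbd : ∀ᶠ r in atTop, ∀ c ∈ cs r, 0 ≤ (1 + c^2) * Real.sin (t / s r / 2) ^ 2 ∧
      (1 + c^2) * Real.sin (t / s r / 2) ^ 2 ≤ M r := by
    filter_upwards [hvar, hc] with r ⟨h0, h1, h2, h3⟩ h4 c hcm
    refine ⟨by positivity, ?_⟩
    have h5 : Real.sin (t / s r / 2) ^ 2 ≤ (t / s r / 2) ^ 2 := by
      rw [sq_le_sq]; exact Real.abs_sin_le_abs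
    have hr : (0:ℝ) < r := by exact_mod_cast h0
    have h6 : (t / s r / 2) ^ 2 ≤ t ^ 2 / r ^ 3 := by
      have : (t / s r / 2) ^ 2 = t ^ 2 / (4 * s r ^ 2) := by field_simp; norm_num
      rw [this]
      apply div_le_div_of_nonneg_left (by positivity) (by positivity) (by linarith)
    calc (1 + c^2) * Real.sin (t / s r / 2) ^ 2 ≤ (324 * (r:ℝ)^2) * (t ^ 2 / r ^ 3) :=
          mul_le_mul (h4 c hcm) (h5.trans h6) (by positivity) (by positivity)
      _ = M r := by simp only [M]; field_simp
  have hW2 : Tendsto (fun r => (((cs r).map fun c => Real.cos (t / s r /2) -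
      c * Real.sin (t / s r/2)).prod) ^ 2) atTop (nhds (Real.exp (-t^2))) := by
    have hlow : Tendsto (fun r => Real.exp (-((1 + 2 * M r) * (Real.sin (t / s r / 2) ^ 2 *
        ((cs r).map fun c : ℝ => 1 + c ^ 2).sum)))) atTop (nhds (Real.exp (-t^2))) := by
      apply (Real.continuous_exp.tendsto _).comp
      have := (((hM0.const_mul 2).const_add 1).mul hu).neg
      simpa using this
    have hup : Tendsto (fun r => Real.exp (-(Real.sin (t / s r / 2) ^ 2 *
        ((cs r).map fun c : ℝ => 1 + c ^ 2).sum))) atTop (nhds (Real.exp (-t^2))) :=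
      (Real.continuous_exp.tendsto _).comp hu.neg
    have hb : ∀ r, ((∀ θ : ℝ, (((cs r).map fun c => Real.cos (θ/2) - c * Real.sin (θ/2)).prod) ^ 2 =
        (((cs r).map fun c : ℝ => 1 + c^2).map fun β => 1 - β * Real.sin (θ/2) ^ 2).prod)) →
        (∀ c ∈ cs r, 0 ≤ (1 + c^2) * Real.sin (t / s r / 2) ^ 2 ∧
          (1 + c^2) * Real.sin (t / s r / 2) ^ 2 ≤ M r) → M r ≤ 1/2 → _ := fun r h1 h2 h3 => by
      have := prod_bounds ((cs r).map fun c : ℝ => 1 + c ^ 2) (Real.sin (t / s r / 2) ^ 2) (M r) h3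
        (by
          intro β hβ
          obtain ⟨c, hcm, rfl⟩ := Multiset.mem_map.1 hβ
          exact h2 c hcm)
      rw [← h1] at this
      exact this
    refine tendsto_of_tendsto_of_tendsto_of_le_of_le' hlow hup ?_ ?_
    · filter_upwards [hsq, hbd, hMhalf] with r h1 h2 h3 using (hb r h1 h2 h3).1
    · filter_upwards [hsq, hbd, hMhalf] with r h1 h2 h3 using (hb r h1 h2 h3).2
  have hpos : ∀ᶠ r in atTop, 0 ≤ ((cs r).map fun c => Real.cos (t / s r /2) -
      c * Real.sin (t / s r/2)).prod := by
    have hcos : ∀ᶠ r in atTop, 0 < Real.cos (t / s r / 2) := by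
      have := (Real.continuous_cos.tendsto 0).comp hth
      rw [Real.cos_zero] at this
      exact this.eventually (lt_mem_nhds one_pos)
    filter_upwards [hcos, hbd, hMhalf] with r h1 h2 h3
    apply Multiset.prod_nonneg
    intro a ha
    obtain ⟨c, hcm, rfl⟩ := Multiset.mem_map.1 ha
    have h4 := (h2 c hcm).2
    have h5 := Real.sin_sq_add_cos_sq (t / s r / 2)
    have h6 : (c * Real.sin (t / s r / 2)) ^ 2 ≤ Real.cos (t / s r / 2) ^ 2 := by nlinarith
    have := abs_le_of_sq_le_sq h6 h1.le
    linarith [le_abs_self (c * Real.sin (t / s r / 2))]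
  have h7 := (Real.continuous_sqrt.tendsto _).comp hW2
  have h8 : √(Real.exp (-t^2)) = Real.exp (-(t^2/2)) := by
    rw [Real.sqrt_eq_iff_mul_self_eq (Real.exp_pos _).le (Real.exp_pos _).le, ← Real.exp_add]
    ring_nf
  rw [h8] at h7
  refine h7.congr' ?_
  filter_upwards [hpos] with r h
  simp only [Function.comp]
  exact Real.sqrt_sq h

/-! ### Weak convergence -/

lemma vol_le {r : ℕ} (p : Fin r → Fin r → Fin (r + 1)) : vol p ≤ r ^ 3 := by
  calc vol p ≤ ∑ _i : Fin r, ∑ _j : Fin r, r :=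
        sum_le_sum fun i _ => sum_le_sum fun j _ => Nat.lt_succ_iff.1 (p i j).2
    _ = r ^ 3 := by simp; ring

lemma zero_mem_CSPP (r : ℕ) : (fun _ _ => 0) ∈ CSPP r := by
  simp [CSPP, PP]

/-- Weak convergence from the Fourier product formulas. -/
lemma clt_of_gf (hgf : ∀ r : ℕ, ∑ p ∈ CSPP r, (Polynomial.X : Polynomial ℂ) ^ vol p =
      (1 + Qm (Polynomial.X : Polynomial ℂ) r).det) (f : BoundedContinuousFunction ℝ ℝ) :
    Tendsto (fun r : ℕ =>
        (∑ p ∈ CSPP r, f (((vol p : ℝ) - meanCSPP r) / sdCSPP r)) / ((CSPP r).card : ℝ))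
        atTop (nhds (∫ x, f x ∂(ProbabilityTheory.gaussianReal 0 1))) := by
  have hne : ∀ r, (CSPP r).Nonempty := fun r => ⟨_, zero_mem_CSPP r⟩
  have hcard : ∀ r, (#(CSPP r) : ℝ) ≠ 0 := fun r => by exact_mod_cast (hne r).card_pos.ne'
  have hex : ∀ r : ℕ, ∃ cs : Multiset ℝ, Multiset.card cs = r ^ 3 ∧
      (∀ c ∈ cs, 1 + c ^ 2 ≤ 4 * ((9 * r : ℕ) : ℝ) ^ 2) ∧
      ∀ θ : ℝ, ∑ x ∈ CSPP r, Complex.exp (((θ * (vol x - (r ^ 3 : ℕ) / 2) : ℝ) : ℂ) * Complex.I) =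
        (((#(CSPP r) : ℝ) * (cs.map fun c => Real.cos (θ/2) - c * Real.sin (θ/2)).prod : ℝ) : ℂ) := by
    intro r
    have hdeg : (∑ p ∈ CSPP r, (Polynomial.X : Polynomial ℂ) ^ vol p).natDegree ≤ r ^ 3 := by
      apply Polynomial.natDegree_sum_le_of_forall_le
      intro p _
      rw [Polynomial.natDegree_X_pow]
      exact vol_le p
    have h0 : (∑ p ∈ CSPP r, (Polynomial.X : Polynomial ℂ) ^ vol p) ≠ 0 := by
      intro h
      have := congrArg (Polynomial.eval 1) h
      simp only [Polynomial.eval_finsetSum, Polynomial.eval_pow, Polynomial.eval_X, one_pow,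
        sum_const, nsmul_eq_mul, mul_one, Polynomial.eval_zero] at this
      exact hcard r (by exact_mod_cast this)
    obtain ⟨h1, h2⟩ := roots_structure r _ (hgf r) h0 hdeg
    refine fourier_prod (CSPP r) (hne r) vol (r ^ 3) (9 * r) _ rfl hdeg h1 fun ζ hζ => ?_
    obtain ⟨d, hd, h⟩ := h2 ζ hζ
    rw [mem_Icc] at hd
    exact ⟨3 * d, mem_Icc.2 ⟨by omega, by omega⟩, h⟩
  choose cs hc1 hc2 hc3 using hex
  have hmom := fun r => moments_of_fourier (CSPP r) (hne r) vol (r ^ 3) (cs r) (hc3 r)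
  have hmean : ∀ r, meanCSPP r = (r ^ 3 : ℕ) / 2 := fun r => (hmom r).1
  have hsd : ∀ r, sdCSPP r = √(((cs r).map fun c : ℝ => 1 + c ^ 2).sum / 4) := fun r => by
    rw [sdCSPP, hmean, (hmom r).2.1]
  let Y : ∀ r : ℕ, (Fin r → Fin r → Fin (r + 1)) → ℝ :=
    fun r p => ((vol p : ℝ) - meanCSPP r) / sdCSPP r
  let μ : ℕ → Measure ℝ := fun r =>
    (#(CSPP r) : ENNReal)⁻¹ • ∑ p ∈ CSPP r, Measure.dirac (Y r p)
  have hprob : ∀ r, IsProbabilityMeasure (μ r) := fun r => ⟨by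
    simp only [μ, Measure.smul_apply, Measure.finsetSum_apply, measure_univ, sum_const,
      nsmul_eq_mul, mul_one, smul_eq_mul]
    exact ENNReal.inv_mul_cancel (by exact_mod_cast (hne r).card_pos.ne') (by simp)⟩
  have hintegral : ∀ {E : Type} [NormedAddCommGroup E] [NormedSpace ℝ E] [CompleteSpace E]
      (r : ℕ) (g : ℝ → E), ∫ x, g x ∂(μ r) =
      (#(CSPP r) : ℝ)⁻¹ • ∑ p ∈ CSPP r, g (Y r p) := by
    intro E _ _ _ r g
    simp only [μ]
    rw [integral_smul_measure, integral_finsetSum_measure]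
    · simp [integral_dirac]
    · intro p _
      exact integrable_dirac (by simp)
  let ν : ℕ → ProbabilityMeasure ℝ := fun r => ⟨μ r, hprob r⟩
  let γ : ProbabilityMeasure ℝ := ⟨ProbabilityTheory.gaussianReal 0 1, inferInstance⟩
  have hconv : Tendsto ν atTop (nhds γ) := by
    apply ProbabilityMeasure.tendsto_of_tendsto_charFun
    intro t
    have hlim := tendsto_prod cs sdCSPP (.of_forall hc1)
      (.of_forall fun r c h => (hc2 r c h).trans (le_of_eq (by push_cast; ring)))
      (.of_forall hsd) (.of_forall fun r => (hmom r).2.2) t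
    have h1 : charFun (γ : Measure ℝ) t = ((Real.exp (-(t^2/2)) : ℝ) : ℂ) := by
      change charFun (ProbabilityTheory.gaussianReal 0 1) t = _
      rw [ProbabilityTheory.charFun_gaussianReal]
      push_cast
      congr 1
      simp
    rw [h1]
    refine ((Complex.continuous_ofReal.tendsto _).comp hlim).congr fun r => ?_
    change _ = charFun (μ r) t
    rw [charFun_apply_real, hintegral]
    have h2 : ∀ p, Complex.exp ((t:ℂ) * (Y r p : ℂ) * Complex.I) =
        Complex.exp (((t / sdCSPP r * (vol p - (r ^ 3 : ℕ) / 2) : ℝ) : ℂ) * Complex.I) := by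
      intro p
      simp only [Y, hmean]
      rw [← Complex.ofReal_mul]
      congr 3
      ring
    simp only [h2, hc3 r]
    simp only [Function.comp]
    rw [Complex.real_smul, ← Complex.ofReal_mul, inv_mul_cancel_left₀ (hcard r)]
  have := (ProbabilityMeasure.tendsto_iff_forall_integral_tendsto.1 hconv) f
  refine this.congr fun r => ?_
  change ∫ x, f x ∂(μ r) = _
  rw [hintegral, smul_eq_mul, div_eq_inv_mul]

/-- Central limit law for cyclically symmetric plane partitions: as `r → ∞`, the normalised
volumes `Y_r = (X_r − μ_r)/σ_r` of uniformly random cyclically symmetric plane partitions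
converge in distribution to a standard normal random variable; i.e., for every bounded
continuous test function `f`, the expectation `E[f(Y_r)]` converges to the integral of `f`
against the standard Gaussian measure. -/
theorem volume_clt_CSPP :
    ∀ f : BoundedContinuousFunction ℝ ℝ,
      Tendsto (fun r : ℕ =>
        (∑ p ∈ CSPP r, f (((vol p : ℝ) - meanCSPP r) / sdCSPP r)) / ((CSPP r).card : ℝ))
        atTop (nhds (∫ x, f x ∂(ProbabilityTheory.gaussianReal 0 1))) := by
  intro f
  exact clt_of_gf (fun r => gf_eq_det _ r) f
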